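/- Let q be a prime power with q > 2 and let S be an algebraic hypersurface of PG(6,q^2) of degree q+1 defined over GF(q^2), not containing any solid, with exactly q^11 + q^9 + q^7 + q^4 + q^2 + 1 rational points, and let Sigma_3 be a solid with |S ∩ Sigma_3| = q^4 + q^2 + 1. If Sigma_4 is a 4-dimensional projective subspace of PG(6,q^2) containing Sigma_3 and C := S ∩ Sigma_4, then every line of Sigma_4 meets C in exactly 1, q+1, or q^2+1 rational points. -/

import Mathlib

open MvPolynomial Module

/-- The set of points of the projective subspace of `PG(n-1, F)` determined by
the linear subspace `W` of `F^n`. -/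
def projPts {F : Type} [Field F] {n : ℕ} (W : Submodule F (Fin n → F)) :
    Set (Projectivization F (Fin n → F)) :=
  {P | P.submodule ≤ W}

/-- The set of `F`-rational points of the hypersurface of `PG(n-1, F)` defined by the
homogeneous polynomial `f`. -/
def hypersurfacePts {F : Type} [Field F] {n : ℕ} (f : MvPolynomial (Fin n) F) :
    Set (Projectivization F (Fin n → F)) :=
  {P | MvPolynomial.eval P.rep f = 0}


section comb
open Classical

lemma comb_plane {K : Type} [Field K] [Fintype K] (q : ℕ) (hq : 2 ≤ q)
    (hK : Fintype.card K = q ^ 2) (B : K → K → Prop)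
    (hcol : ∀ s, (Finset.univ.filter (fun t => B s t)).card = q)
    (hle : ∀ m c, (Finset.univ.filter (fun s => B s (m * s + c))).card ≤ q + 1)
    (hge : ∀ m c, 1 ≤ (Finset.univ.filter (fun s => B s (m * s + c))).card) :
    ∀ m c, (Finset.univ.filter (fun s => B s (m * s + c))).card = 1 ∨
      (Finset.univ.filter (fun s => B s (m * s + c))).card = q + 1 := by
  set n : K → K → ℕ := fun m c => (Finset.univ.filter (fun s => B s (m * s + c))).card with hn
  let β : K → K → ℤ := fun s t => if B s t then 1 else 0
  have hnβ : ∀ m c, (n m c : ℤ) = ∑ s, β s (m * s + c) := by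
    intro m c; simp [hn, β]
  have hcolβ : ∀ s, ∑ t, β s t = (q : ℤ) := by
    intro s; simp [β, hcol s]
  have hsum1 : ∑ m, ∑ c, (n m c : ℤ) = (q : ℤ) ^ 5 := by
    have : ∀ m : K, ∑ c, (n m c : ℤ) = (q : ℤ) ^ 3 := by
      intro m
      simp_rw [hnβ]
      rw [Finset.sum_comm]
      have : ∀ s : K, ∑ c, β s (m * s + c) = (q : ℤ) := by
        intro s
        rw [← hcolβ s]
        exact Fintype.sum_equiv (Equiv.addLeft (m * s)) _ _ (fun c => by simp)
      simp_rw [this]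
      simp [hK]; ring
    simp_rw [this]; simp [hK]; ring
  have hsum2 : ∑ m, ∑ c, (n m c : ℤ) * n m c = (q : ℤ) ^ 6 + q ^ 5 - q ^ 4 := by
    have e1 : ∑ m, ∑ c, (n m c : ℤ) * n m c
        = ∑ s, ∑ s', ∑ m, ∑ c, β s (m * s + c) * β s' (m * s' + c) := by
      simp_rw [hnβ, Finset.sum_mul_sum]
      calc _ = ∑ m : K, ∑ s, ∑ s', ∑ c, β s (m * s + c) * β s' (m * s' + c) := by
            refine Finset.sum_congr rfl fun m _ => ?_
            rw [Finset.sum_comm]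
            refine Finset.sum_congr rfl fun s _ => ?_
            rw [Finset.sum_comm]
        _ = _ := by
            rw [Finset.sum_comm]
            refine Finset.sum_congr rfl fun s _ => ?_
            rw [Finset.sum_comm]
    have e2 : ∀ s s' : K, ∑ m, ∑ c, β s (m * s + c) * β s' (m * s' + c)
        = (q : ℤ) ^ 2 + if s' = s then (q : ℤ) ^ 3 - q ^ 2 else 0 := by
      intro s s'
      by_cases h : s' = s
      · subst h
        have : ∀ m : K, ∑ c, β s' (m * s' + c) * β s' (m * s' + c) = (q : ℤ) := by
          intro m
          rw [← hcolβ s']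
          refine Fintype.sum_equiv (Equiv.addLeft (m * s')) _ _ (fun c => ?_)
          simp [β]
        simp_rw [this]; simp [hK]; ring
      · rw [if_neg h, add_zero]
        have hne : s' - s ≠ 0 := sub_ne_zero.mpr h
        have hne' : s - s' ≠ 0 := sub_ne_zero.mpr (Ne.symm h)
        have : ∑ t, ∑ t', β s t * β s' t' = (q : ℤ) ^ 2 := by
          rw [← Finset.sum_mul_sum, hcolβ, hcolβ]; ring
        rw [← this, ← Fintype.sum_prod_type', ← Fintype.sum_prod_type']
        refine Fintype.sum_equiv (Equiv.ofBijective
          (fun x : K × K => (x.1 * s + x.2, x.1 * s' + x.2)) ?_) _ _ (fun x => rfl)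
        rw [Fintype.bijective_iff_injective_and_card]
        refine ⟨?_, rfl⟩
        rintro ⟨m, c⟩ ⟨m', c'⟩ hx
        simp only [Prod.mk.injEq] at hx
        have h1 : (m - m') * (s - s') = 0 := by linear_combination hx.1 - hx.2
        have h2 : m = m' := by
          rcases mul_eq_zero.mp h1 with h | h
          · exact sub_eq_zero.mp h
          · exact absurd h hne'
        subst h2
        simpa using hx.1
    rw [e1]
    simp_rw [e2, Finset.sum_add_distrib]
    simp [hK]; ring
  have hzero : ∑ m, ∑ c, ((n m c : ℤ) - 1) * (q + 1 - n m c) = 0 := by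
    have : ∀ m c, ((n m c : ℤ) - 1) * (q + 1 - n m c) =
      (q + 2) * n m c - n m c * n m c - (q + 1) := by intros; ring
    simp_rw [this, Finset.sum_sub_distrib, ← Finset.mul_sum, hsum1, hsum2]
    simp [hK]; ring
  have hnn : ∀ m c, 0 ≤ ((n m c : ℤ) - 1) * (q + 1 - n m c) := by
    intro m c
    have h1 := hle m c
    have h2 := hge m c
    apply mul_nonneg
    · have : (1 : ℤ) ≤ n m c := by exact_mod_cast h2
      linarith
    · have : (n m c : ℤ) ≤ q + 1 := by exact_mod_cast h1
      linarith
  intro m c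
  have h1 := (Finset.sum_eq_zero_iff_of_nonneg (fun m _ =>
    Finset.sum_nonneg (fun c _ => hnn m c))).mp hzero m (Finset.mem_univ _)
  have h2 := (Finset.sum_eq_zero_iff_of_nonneg (fun c _ => hnn m c)).mp h1 c (Finset.mem_univ _)
  rcases mul_eq_zero.mp h2 with h | h
  · left; have : (n m c : ℤ) = 1 := by linarith
    exact_mod_cast this
  · right; have : (n m c : ℤ) = q + 1 := by linarith
    exact_mod_cast this

lemma comb_lines {K : Type} [Field K] [Fintype K] (q : ℕ) (hq : 2 ≤ q)
    (hK : Fintype.card K = q ^ 2) (B : K → K → Prop)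
    (hcol : ∀ s, (Finset.univ.filter (fun t => B s t)).card = q)
    (hline : ∀ m c, (∀ s, B s (m * s + c)) ∨
      (Finset.univ.filter (fun s => B s (m * s + c))).card ≤ q) :
    ∃ m0, (∀ c, (∀ s, B s (m0 * s + c)) ∨ ∀ s, ¬ B s (m0 * s + c)) ∧
      ∀ m, m ≠ m0 → ∀ c, (Finset.univ.filter (fun s => B s (m * s + c))).card = q := by
  have hqq : q < q ^ 2 := by nlinarith
  -- Step 1
  have step1 : ∀ s0 t0, B s0 t0 → ∃ m, ∀ s, B s (m * s + (t0 - m * s0)) := by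
    intro s0 t0 h0
    by_contra hcon
    push Not at hcon
    have hle : ∀ m, (Finset.univ.filter (fun s => B s (m * s + (t0 - m * s0)))).card ≤ q := by
      intro m
      rcases hline m (t0 - m * s0) with h | h
      · obtain ⟨s, hs⟩ := hcon m
        exact absurd (h s) hs
      · exact h
    have hle' : ∀ m, ((Finset.univ.erase s0).filter
        (fun s => B s (m * s + (t0 - m * s0)))).card + 1 ≤ q := by
      intro m
      refine le_trans ?_ (hle m)
      rw [Finset.filter_erase, Finset.card_erase_add_one]
      simp [h0]
    have hsum : ∑ m, ((Finset.univ.erase s0).filter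
        (fun s => B s (m * s + (t0 - m * s0)))).card = (q ^ 2 - 1) * q := by
      simp_rw [Finset.card_filter]
      rw [Finset.sum_comm]
      have : ∀ s ∈ Finset.univ.erase s0,
          (∑ m : K, if B s (m * s + (t0 - m * s0)) then 1 else 0) = q := by
        intro s hs
        have hs' : s - s0 ≠ 0 := sub_ne_zero.mpr (Finset.ne_of_mem_erase hs)
        rw [← hcol s, Finset.card_filter]
        refine Fintype.sum_equiv (Equiv.ofBijective
          (fun m : K => m * s + (t0 - m * s0)) ?_) _ _ (fun x => rfl)
        rw [Fintype.bijective_iff_injective_and_card]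
        refine ⟨?_, rfl⟩
        intro m m' h
        have h1 : (m - m') * (s - s0) = 0 := by
          simp only at h
          linear_combination h
        rcases mul_eq_zero.mp h1 with h | h
        · exact sub_eq_zero.mp h
        · exact absurd h hs'
      rw [Finset.sum_congr rfl this]
      simp [hK, Finset.card_erase_of_mem]
    have hsum2 : ∑ m : K, (((Finset.univ.erase s0).filter
        (fun s => B s (m * s + (t0 - m * s0)))).card + 1) ≤ q ^ 2 * q := by
      calc _ ≤ ∑ m : K, q := Finset.sum_le_sum (fun m _ => hle' m)
        _ = _ := by simp [hK]
    rw [Finset.sum_add_distrib, hsum] at hsum2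
    simp [hK] at hsum2
    obtain ⟨k, hk⟩ : ∃ k, q ^ 2 = k + 1 := ⟨q ^ 2 - 1, by omega⟩
    rw [hk] at hsum2 hqq
    simp at hsum2
    nlinarith
  set 𝓛 : Finset (K × K) := Finset.univ.filter (fun l => ∀ s, B s (l.1 * s + l.2)) with hL
  have hmem : ∀ l, l ∈ 𝓛 ↔ ∀ s, B s (l.1 * s + l.2) := by intro l; simp [hL]
  have step2 : 𝓛.card ≤ q := by
    by_contra hcon
    obtain ⟨M, hM, hMc⟩ := Finset.exists_subset_card_eq (s := 𝓛) (n := q + 1) (by omega)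
    have hex : ∀ s : K, ∃ A ∈ M.powersetCard 2, ∀ l ∈ A, ∀ l' ∈ A,
        l.1 * s + l.2 = l'.1 * s + l'.2 := by
      intro s
      obtain ⟨l, hl, l', hl', hne, heq⟩ := Finset.exists_ne_map_eq_of_card_lt_of_maps_to
        (s := M) (t := Finset.univ.filter (fun t => B s t)) (f := fun l => l.1 * s + l.2)
        (by rw [hcol, hMc]; omega) (by
          intro l hl
          have := (hmem l).mp (hM hl) s
          simpa using this)
      refine ⟨{l, l'}, ?_, ?_⟩
      · rw [Finset.mem_powersetCard]
        refine ⟨?_, Finset.card_pair hne⟩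
        intro x hx
        simp only [Finset.mem_insert, Finset.mem_singleton] at hx
        rcases hx with rfl | rfl <;> assumption
      · simp only [Finset.mem_insert, Finset.mem_singleton]
        rintro x (rfl | rfl) y (rfl | rfl)
        · rfl
        · exact heq
        · exact heq.symm
        · rfl
    choose A hA hA' using hex
    have hinj : Function.Injective A := by
      intro s s' hss
      have h2 := (Finset.mem_powersetCard.mp (hA s)).2
      obtain ⟨l, l', hne, hAs⟩ := Finset.card_eq_two.mp h2
      have e1 := hA' s l (by simp [hAs]) l' (by simp [hAs])
      have e2 := hA' s' l (by simp [← hss, hAs]) l' (by simp [← hss, hAs])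
      have : (l.1 - l'.1) * (s - s') = 0 := by linear_combination e1 - e2
      rcases mul_eq_zero.mp this with h | h
      · exfalso; apply hne
        have h1 := sub_eq_zero.mp h
        rw [h1] at e1
        exact Prod.ext h1 (by simpa using e1)
      · exact sub_eq_zero.mp h
    have hc : Fintype.card K ≤ (M.powersetCard 2).card := by
      rw [← Finset.card_univ]
      exact Finset.card_le_card_of_injOn A (fun s _ => hA s) (hinj.injOn)
    rw [Finset.card_powersetCard, hMc, hK, Nat.choose_two_right] at hc
    have : q ^ 2 * 2 ≤ (q + 1) * (q + 1 - 1) :=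
      le_trans (Nat.mul_le_mul_right 2 hc) (Nat.div_mul_le_self _ _)
    simp at this
    nlinarith
  have himg : ∀ s, 𝓛.image (fun l => l.1 * s + l.2) = Finset.univ.filter (fun t => B s t) := by
    intro s
    ext t
    simp only [Finset.mem_image, Finset.mem_filter, Finset.mem_univ, true_and]
    constructor
    · rintro ⟨l, hl, rfl⟩
      exact (hmem l).mp hl s
    · intro h
      obtain ⟨m, hm⟩ := step1 s t h
      exact ⟨(m, t - m * s), (hmem _).mpr hm, by simp⟩
  have hcard : 𝓛.card = q := by
    refine le_antisymm step2 ?_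
    have := Finset.card_image_le (s := 𝓛) (f := fun l => l.1 * (0 : K) + l.2)
    rw [himg, hcol] at this
    exact this
  have hinj : ∀ s, Set.InjOn (fun l : K × K => l.1 * s + l.2) 𝓛 := by
    intro s
    rw [← Finset.card_image_iff, himg, hcol, hcard]
  obtain ⟨l0, hl0⟩ : 𝓛.Nonempty := Finset.card_pos.mp (by omega)
  have hslope : ∀ l ∈ 𝓛, l.1 = l0.1 := by
    intro l hl
    by_contra hne
    have hne' : l.1 - l0.1 ≠ 0 := sub_ne_zero.mpr hne
    have := hinj ((l0.2 - l.2) / (l.1 - l0.1)) hl hl0 (by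
      simp only
      field_simp
      ring)
    exact hne (by rw [this])
  have hchar : ∀ s t, B s t ↔ (l0.1, t - l0.1 * s) ∈ 𝓛 := by
    intro s t
    constructor
    · intro h
      obtain ⟨m, hm⟩ := step1 s t h
      have h1 : (m, t - m * s) ∈ 𝓛 := (hmem _).mpr hm
      have h2 := hslope _ h1
      simp only at h2
      rw [← h2]; exact h1
    · intro h
      have := (hmem _).mp h s
      simpa using this
  refine ⟨l0.1, ?_, ?_⟩
  · intro c
    by_cases h : (l0.1, c) ∈ 𝓛
    · left; intro s; rw [hchar]; simpa using h
    · right; intro s; rw [hchar]; simpa using h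
  · intro m hm c
    have hm' : m - l0.1 ≠ 0 := sub_ne_zero.mpr hm
    rw [← hcard]
    refine Finset.card_bij (fun s _ => (l0.1, m * s + c - l0.1 * s)) ?_ ?_ ?_
    · intro s hs
      simpa [hchar] using hs
    · intro s _ s' _ h
      simp only [Prod.mk.injEq, true_and] at h
      have : (m - l0.1) * (s - s') = 0 := by linear_combination h
      rcases mul_eq_zero.mp this with h | h
      · exact absurd h hm'
      · exact sub_eq_zero.mp h
    · intro l hl
      refine ⟨(l.2 - c) / (m - l0.1), ?_, ?_⟩
      · simp only [Finset.mem_filter, Finset.mem_univ, true_and, hchar]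
        have : m * ((l.2 - c) / (m - l0.1)) + c - l0.1 * ((l.2 - c) / (m - l0.1)) = l.2 := by
          field_simp; ring
        rw [this, ← hslope l hl]; exact hl
      · have : m * ((l.2 - c) / (m - l0.1)) + c - l0.1 * ((l.2 - c) / (m - l0.1)) = l.2 := by
          field_simp; ring
        rw [this, ← hslope l hl]
end comb

section lines
open Classical

noncomputable def linePoly {σ K : Type} [Field K] (G : MvPolynomial σ K) (z P : σ → K) :
    Polynomial K :=
  MvPolynomial.aeval (fun i => Polynomial.C (z i) + Polynomial.C (P i) * Polynomial.X) G

lemma linePoly_eval {σ K : Type} [Field K] (G : MvPolynomial σ K) (z P : σ → K) (l : K) :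
    (linePoly G z P).eval l = eval (z + l • P) G := by
  unfold linePoly
  induction G using MvPolynomial.induction_on with
  | C r => simp only [aeval_C, Polynomial.algebraMap_eq, Polynomial.eval_C, eval_C]
  | add p q hp hq => simp only [map_add, Polynomial.eval_add, hp, hq]
  | mul_X p i hp =>
    simp only [map_mul, Polynomial.eval_mul, hp, aeval_X, eval_X, Polynomial.eval_add,
      Polynomial.eval_C, Polynomial.eval_X, Pi.add_apply, Pi.smul_apply, smul_eq_mul]
    ring

lemma linePoly_natDegree {σ K : Type} [Field K] (G : MvPolynomial σ K) (z P : σ → K) (d : ℕ)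
    (hd : G.totalDegree ≤ d) : (linePoly G z P).natDegree ≤ d := by
  have := MvPolynomial.aeval_natDegree_le (m := d) (n := 1) G hd
    (fun i => Polynomial.C (z i) + Polynomial.C (P i) * Polynomial.X) (by
      intro i; compute_degree)
  simpa [linePoly] using this

lemma linePoly_monomial_coeff {σ K : Type} [Field K] (s : σ →₀ ℕ) (z P : σ → K) (a : K) :
    (linePoly (monomial s a) z P).coeff s.degree = eval P (monomial s a) := by
  unfold linePoly
  rw [aeval_monomial, eval_monomial, Polynomial.algebraMap_eq, Polynomial.coeff_C_mul]
  congr 1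
  have key : ∀ t : Finset σ, (∏ i ∈ t, (Polynomial.C (z i) + Polynomial.C (P i) * Polynomial.X) ^ s i).coeff
      (∑ i ∈ t, s i) = ∏ i ∈ t, P i ^ s i := by
    have h1 : ∀ i, (Polynomial.C (z i) + Polynomial.C (P i) * Polynomial.X).natDegree ≤ 1 := by
      intro i; compute_degree
    have h2 : ∀ i, ((Polynomial.C (z i) + Polynomial.C (P i) * Polynomial.X) ^ s i).natDegree
        ≤ s i := by
      intro i
      simpa using Polynomial.natDegree_pow_le_of_le (s i) (h1 i)
    intro t
    induction t using Finset.induction_on with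
    | empty => simp
    | insert i t hi ih =>
      rw [Finset.prod_insert hi, Finset.sum_insert hi, Finset.prod_insert hi,
        Polynomial.coeff_mul_add_eq_of_natDegree_le (h2 i), ih]
      · have := Polynomial.coeff_pow_of_natDegree_le (m := s i) (h1 i)
        rw [mul_one] at this
        rw [this]; simp
      · exact le_trans (Polynomial.natDegree_prod_le _ _) (Finset.sum_le_sum fun i _ => h2 i)
  exact key s.support

lemma linePoly_coeff {σ K : Type} [Field K] (G : MvPolynomial σ K) (z P : σ → K) (d : ℕ)
    (hd : G.totalDegree ≤ d) :
    (linePoly G z P).coeff d = eval P (homogeneousComponent d G) := by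
  have hadd : ∀ A B : MvPolynomial σ K, linePoly (A + B) z P = linePoly A z P + linePoly B z P := by
    intro A B; simp [linePoly]
  have hG : G = ∑ s ∈ G.support, monomial s (coeff s G) := (support_sum_monomial_coeff G).symm
  have e1 : linePoly G z P = ∑ s ∈ G.support, linePoly (monomial s (coeff s G)) z P := by
    conv_lhs => rw [hG]
    simp only [linePoly, map_sum]
  rw [e1, Polynomial.finsetSum_coeff, homogeneousComponent_apply, map_sum, Finset.sum_filter]
  refine Finset.sum_congr rfl fun s hs => ?_
  split_ifs with h
  · rw [← h, linePoly_monomial_coeff]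
  · apply Polynomial.coeff_eq_zero_of_natDegree_lt
    refine lt_of_le_of_lt (linePoly_natDegree _ _ _ s.degree (totalDegree_monomial_le _ _)) ?_
    have : s.degree ≤ d := by
      refine le_trans ?_ hd
      rw [Finsupp.degree_apply]
      exact le_totalDegree hs
    omega

lemma poly_count {K : Type} [Field K] [Fintype K] (p : Polynomial K) (d : ℕ)
    (hd : p.natDegree ≤ d) (hp : p ≠ 0) :
    (Finset.univ.filter (fun l => p.eval l = 0)).card ≤ d := by
  refine le_trans ?_ (le_trans (Polynomial.card_roots' p) hd)
  refine le_trans (Finset.card_le_card (t := p.roots.toFinset) ?_) (Multiset.toFinset_card_le _)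
  intro l hl
  simpa [hp] using hl

lemma poly_zero_of_all {K : Type} [Field K] [Fintype K] (p : Polynomial K)
    (hd : p.natDegree < Fintype.card K) (h : ∀ l, p.eval l = 0) : p = 0 := by
  by_contra hp
  have := poly_count p _ le_rfl hp
  simp [h] at this
  omega

lemma sz_bound {K : Type} [Field K] [Fintype K] (G : MvPolynomial (Fin 3) K) (hG : G ≠ 0) (d : ℕ)
    (hd : G.totalDegree ≤ d) :
    (Finset.univ.filter (fun y => eval y G = 0)).card ≤ d * Fintype.card K ^ 2 := by
  have h := schwartz_zippel_totalDegree hG (Finset.univ : Finset K)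
  simp only [Fintype.piFinset_univ, Finset.card_univ] at h
  have hc : (0 : ℚ≥0) < Fintype.card K := by
    exact_mod_cast Fintype.card_pos
  rw [div_le_div_iff₀ (by positivity) hc] at h
  have h2 : (Finset.univ.filter (fun y => eval y G = 0)).card * Fintype.card K ≤
    G.totalDegree * Fintype.card K ^ 3 := by exact_mod_cast h
  have h3 : (Finset.univ.filter (fun y => eval y G = 0)).card ≤
    G.totalDegree * Fintype.card K ^ 2 := by
    refine Nat.le_of_mul_le_mul_right ?_ (Fintype.card_pos (α := K))
    calc _ ≤ _ := h2
      _ = _ := by ring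
  exact le_trans h3 (Nat.mul_le_mul_right _ hd)

lemma totalDegree_drop {K : Type} [Field K] [Fintype K] (G : MvPolynomial (Fin 3) K) (d : ℕ)
    (hd : G.totalDegree ≤ d + 1) (hdK : d + 1 ≤ Fintype.card K)
    (h : ∀ P, eval P (homogeneousComponent (d + 1) G) = 0) : G.totalDegree ≤ d := by
  have h0 : homogeneousComponent (d + 1) G = 0 := by
    refine IsHomogeneous.eq_zero_of_forall_eval_eq_zero_of_le_card
      (homogeneousComponent_isHomogeneous _ _) h ?_
    simpa using hdK
  rw [totalDegree, Finset.sup_le_iff]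
  intro s hs
  have h1 : (s.sum fun _ e => e) ≤ d + 1 := le_trans (le_totalDegree hs) hd
  by_contra hcon
  have h2 : s.degree = d + 1 := by
    have : s.degree = s.sum fun _ e => e := by rw [Finsupp.degree_apply]; rfl
    omega
  have := coeff_homogeneousComponent (d + 1) G s
  rw [h0, if_pos h2] at this
  simp at this
  exact (mem_support_iff.mp hs) this.symm

/-- Translation-averaging of the zero counts along lines. -/
lemma sum_lines {ι K : Type} [Field K] [Fintype K] [Fintype ι] (Z : (ι → K) → Prop)
    [DecidablePred Z] (P : ι → K) :
    ∑ y, (Finset.univ.filter (fun l : K => Z (y + l • P))).card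
      = Fintype.card K * (Finset.univ.filter Z).card := by
  simp_rw [Finset.card_filter]
  rw [Finset.sum_comm]
  have : ∀ l : K, (∑ y : ι → K, if Z (y + l • P) then 1 else 0) = ∑ y, if Z y then 1 else 0 := by
    intro l
    exact Fintype.sum_equiv (Equiv.addRight (l • P)) _ _ (fun y => rfl)
  simp_rw [this]
  simp

section lemT
variable {K : Type} [Field K] [Fintype K] (q : ℕ) (hq : 2 ≤ q) (hK : Fintype.card K = q ^ 2)
  (G : MvPolynomial (Fin 3) K) (hd : G.totalDegree ≤ q)
  (hN : (Finset.univ.filter (fun y => eval y G = 0)).card = q * (q ^ 2) ^ 2)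
include hq hK hd hN

lemma T_exact (P : Fin 3 → K) (hP : eval P (homogeneousComponent q G) ≠ 0) (y : Fin 3 → K) :
    (Finset.univ.filter (fun l : K => eval (y + l • P) G = 0)).card = q := by
  have hle : ∀ y, (Finset.univ.filter (fun l : K => eval (y + l • P) G = 0)).card ≤ q := by
    intro y
    have hne : linePoly G y P ≠ 0 := by
      intro h
      apply hP
      rw [← linePoly_coeff G y P q hd, h]; simp
    have := poly_count _ q (linePoly_natDegree G y P q hd) hne
    simpa only [linePoly_eval] using this
  have hsum := sum_lines (fun y => eval y G = 0) P
  have hN' : (Finset.univ.filter (fun y => eval y G = 0)).card = q * (q ^ 2) ^ 2 := by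
    convert hN
  replace hsum : ∑ y : Fin 3 → K, (Finset.univ.filter (fun l : K => eval (y + l • P) G = 0)).card
      = q ^ 2 * (q * (q ^ 2) ^ 2) := by
    rw [← hN', ← hK]; convert hsum
  have hsum' : ∑ y : Fin 3 → K, (Finset.univ.filter (fun l : K => eval (y + l • P) G = 0)).card
      = ∑ y : Fin 3 → K, q := by
    rw [hsum]; simp [hK]; ring
  exact (Finset.sum_eq_sum_iff_of_le (fun y _ => hle y)).mp hsum' y (Finset.mem_univ _)

lemma T_ne (P y : Fin 3 → K)
    (h : (Finset.univ.filter (fun l : K => eval (y + l • P) G = 0)).card = q) :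
    eval P (homogeneousComponent q G) ≠ 0 := by
  intro h0
  have hc : (linePoly G y P).coeff q = 0 := by rw [linePoly_coeff G y P q hd, h0]
  have hnd := linePoly_natDegree G y P q hd
  by_cases hz : linePoly G y P = 0
  · simp_rw [← linePoly_eval, hz] at h
    simp [hK] at h
    nlinarith
  · have hlt : (linePoly G y P).natDegree ≤ q - 1 := by
      by_contra hcon
      have : (linePoly G y P).natDegree = q := by omega
      rw [← this] at hc
      exact hz (Polynomial.leadingCoeff_eq_zero.mp hc)
    have := poly_count _ _ hlt hz
    simp_rw [linePoly_eval, h] at this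
    omega

lemma T_exists : ∃ P, eval P (homogeneousComponent q G) ≠ 0 := by
  by_contra hcon
  push Not at hcon
  obtain ⟨d, rfl⟩ : ∃ d, q = d + 1 := ⟨q - 1, by omega⟩
  have h1 := totalDegree_drop G d hd (by rw [hK]; nlinarith) hcon
  have hG : G ≠ 0 := by
    rintro rfl
    simp [hK] at hN
    have : (d + 1) ^ 2 * ((d+1) ^ 2) ^ 2 = (d+1) * ((d+1)^2)^2 := by rw [← hN]; ring
    have h2 := Nat.eq_of_mul_eq_mul_right (by positivity) this
    nlinarith
  have h2 := sz_bound G hG d h1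
  rw [hN, hK] at h2
  have := Nat.le_of_mul_le_mul_right h2 (by positivity)
  omega

lemma T_slope (P : Fin 3 → K) (hP : eval P (homogeneousComponent q G) ≠ 0) (v y : Fin 3 → K) :
    ∃ m0 : K, (∀ m, m ≠ m0 → eval (v + m • P) (homogeneousComponent q G) ≠ 0) ∧
      ((∀ s : K, eval (y + s • (v + m0 • P)) G = 0) ∨
        (∀ s : K, eval (y + s • (v + m0 • P)) G ≠ 0)) := by
  have hform : ∀ m c s : K, (y + s • v) + (m * s + c) • P = (y + c • P) + s • (v + m • P) := by
    intro m c s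
    ext i
    simp
    ring
  obtain ⟨m0, h1, h2⟩ := comb_lines q hq hK (fun s t => eval ((y + s • v) + t • P) G = 0)
    (fun s => T_exact q hq hK G hd hN P hP _) (by
      intro m c
      simp_rw [hform]
      by_cases hz : linePoly G (y + c • P) (v + m • P) = 0
      · left; intro s; rw [← linePoly_eval, hz]; simp
      · right
        have := poly_count _ q (linePoly_natDegree G _ _ q hd) hz
        simpa only [linePoly_eval] using this)
  simp_rw [hform] at h1 h2
  refine ⟨m0, ?_, ?_⟩
  · intro m hm
    exact T_ne q hq hK G hd hN _ _ (h2 m hm 0)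
  · simpa using h1 0

lemma T_bad (v y : Fin 3 → K) (hv : eval v (homogeneousComponent q G) = 0) :
    (∀ s : K, eval (y + s • v) G = 0) ∨ (∀ s : K, eval (y + s • v) G ≠ 0) := by
  obtain ⟨P, hP⟩ := T_exists q hq hK G hd hN
  obtain ⟨m0, h1, h2⟩ := T_slope q hq hK G hd hN P hP v y
  have : m0 = 0 := by
    by_contra h
    exact h1 0 (Ne.symm h) (by simpa using hv)
  subst this
  simpa using h2

lemma T_card : (Finset.univ.filter
    (fun v => eval v (homogeneousComponent q G) = 0)).card ≤ (q ^ 2) ^ 2 := by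
  obtain ⟨P, hP⟩ := T_exists q hq hK G hd hN
  have hinj : Set.InjOn (fun x : (Fin 3 → K) × K => x.1 + x.2 • P)
      (((Finset.univ.filter (fun v => eval v (homogeneousComponent q G) = 0)) ×ˢ
        (Finset.univ : Finset K) : Finset ((Fin 3 → K) × K)) : Set ((Fin 3 → K) × K)) := by
    rintro ⟨v, l⟩ hv ⟨v', l'⟩ hv' heq
    simp at hv hv' heq
    obtain ⟨m0, h1, -⟩ := T_slope q hq hK G hd hN P hP v 0
    have e0 : m0 = 0 := by
      by_contra h
      exact h1 0 (Ne.symm h) (by simpa using hv)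
    have e1 : v' = v + (l - l') • P := by
      rw [sub_smul, add_sub, heq]; simp
    have e2 : l - l' = m0 := by
      by_contra h
      exact h1 _ h (by rw [← e1]; exact hv')
    have e3 : l = l' := by rw [e0] at e2; exact sub_eq_zero.mp e2
    subst e3
    simpa using heq
  have h := Finset.card_le_card_of_injOn (t := (Finset.univ : Finset (Fin 3 → K))) _
    (fun x _ => Finset.mem_univ _) hinj
  rw [Finset.card_product] at h
  simp [hK] at h
  refine Nat.le_of_mul_le_mul_right (c := q ^ 2) ?_ (by positivity)
  calc _ ≤ _ := h
    _ = _ := by ring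

end lemT
end lines

section bez
open Classical

lemma homogDim {K : Type} [Field K] (m : ℕ) :
    2 * finrank K (homogeneousSubmodule (Fin 3) K m) = (m + 1) * (m + 2) := by
  have h : homogeneousSubmodule (Fin 3) K m = restrictSupport K {d : Fin 3 →₀ ℕ | d.degree = m} :=
    homogeneousSubmodule_eq_finsupp_supported (Fin 3) K m
  have h2 : finrank K (restrictSupport K {d : Fin 3 →₀ ℕ | d.degree = m})
      = Nat.card {d : Fin 3 →₀ ℕ | d.degree = m} :=
    Module.finrank_eq_nat_card_basis (basisRestrictSupport K _)
  have h3 : {d : Fin 3 →₀ ℕ | d.degree = m} =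
      ((Finset.univ : Finset (Fin 3)).finsuppAntidiag m : Set (Fin 3 →₀ ℕ)) := by
    ext d
    simp [Finset.mem_finsuppAntidiag, Finsupp.degree_eq_sum]
  rw [h, h2, h3]
  simp only [Nat.card_eq_fintype_card, Fintype.card_coe, Finset.coe_sort_coe]
  rw [Finset.card_finsuppAntidiag_nat_eq_choose]
  simp only [Finset.card_univ, Fintype.card_fin]
  have e : 3 + m - 1 = m + 2 := by omega
  rw [e, Nat.choose_symm_add, Nat.choose_two_right, mul_comm, Nat.div_two_mul_two_of_even]
  · simp; ring
  · have := Nat.even_mul_succ_self (m + 1)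
    simpa [mul_comm] using this

instance homogFin {K : Type} [Field K] (m : ℕ) :
    Module.Finite K (homogeneousSubmodule (Fin 3) K m) :=
  Module.Finite.iff_fg.mpr (homogeneousSubmodule_fg _ _ _)

lemma hc_mul {K : Type} [Field K] (Φ C : MvPolynomial (Fin 3) K) (d c : ℕ) (hΦ : Φ.IsHomogeneous d) :
    homogeneousComponent (c + d) (Φ * C) = Φ * homogeneousComponent c C := by
  conv_lhs => rw [← sum_homogeneousComponent C, Finset.mul_sum, map_sum]
  have : ∀ i, homogeneousComponent (c + d) (Φ * homogeneousComponent i C) =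
      if i = c then Φ * homogeneousComponent i C else 0 := by
    intro i
    have h := hΦ.mul (homogeneousComponent_isHomogeneous i C)
    rw [homogeneousComponent_of_mem h]
    refine if_congr ?_ rfl rfl
    omega
  simp_rw [this]
  rw [Finset.sum_ite_eq']
  split_ifs with h
  · rfl
  · rw [homogeneousComponent_eq_zero]
    · simp
    · simp at h; omega

/-- multiplication as a map of homogeneous pieces -/
noncomputable def mulH {K : Type} [Field K] (Φ : MvPolynomial (Fin 3) K) (d a m : ℕ)
    (hΦ : Φ.IsHomogeneous d) (h : a + d = m) :
    homogeneousSubmodule (Fin 3) K a →ₗ[K] homogeneousSubmodule (Fin 3) K m :=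
  LinearMap.codRestrict _ ((LinearMap.mulRight K Φ).comp (Submodule.subtype _)) (by
    intro A
    have : A.1.IsHomogeneous a := A.2
    rw [← h]
    exact this.mul hΦ)

lemma koszul {K : Type} [Field K] (Φ h : MvPolynomial (Fin 3) K) (d e c : ℕ)
    (hΦ : Φ.IsHomogeneous d) (hh : h.IsHomogeneous e) (hrel : IsRelPrime Φ h)
    (hΦ0 : Φ ≠ 0) (U : Submodule K (homogeneousSubmodule (Fin 3) K (c + d + e)))
    (hU1 : ∀ A : homogeneousSubmodule (Fin 3) K (c + e), mulH Φ d (c + e) (c + d + e) hΦ (by omega) A ∈ U)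
    (hU2 : ∀ A : homogeneousSubmodule (Fin 3) K (c + d), mulH h e (c + d) (c + d + e) hh (by omega) A ∈ U) :
    finrank K (homogeneousSubmodule (Fin 3) K (c + e)) + finrank K (homogeneousSubmodule (Fin 3) K (c + d))
     ≤ finrank K U + finrank K (homogeneousSubmodule (Fin 3) K c) := by
  set ψ := (mulH Φ d (c + e) (c + d + e) hΦ (by omega)).coprod (mulH h e (c + d) (c + d + e) hh (by omega)) with hψ
  have h1 : finrank K (LinearMap.range ψ) ≤ finrank K U := by
    apply Submodule.finrank_mono
    rintro _ ⟨x, rfl⟩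
    rw [hψ, LinearMap.coprod_apply]
    exact U.add_mem (hU1 _) (hU2 _)
  set φ := (-(mulH h e c (c + e) hh rfl)).prod (mulH Φ d c (c + d) hΦ rfl) with hφ
  have h2 : LinearMap.ker ψ ≤ LinearMap.range φ := by
    rintro ⟨A, B⟩ hAB
    rw [LinearMap.mem_ker, hψ, LinearMap.coprod_apply] at hAB
    have h3 : A.1 * Φ + B.1 * h = 0 := congrArg Subtype.val hAB
    have h4 : Φ ∣ B.1 * h := ⟨-A.1, by linear_combination h3⟩
    have h5 : Φ ∣ B.1 := hrel.dvd_of_dvd_mul_right h4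
    obtain ⟨C, hC⟩ := h5
    have hB : B.1.IsHomogeneous (c + d) := B.2
    have h6 : Φ * homogeneousComponent c C = B.1 := by
      rw [← hc_mul Φ C d c hΦ, ← hC, homogeneousComponent_eq_self hB]
    refine ⟨⟨homogeneousComponent c C, homogeneousComponent_isHomogeneous _ _⟩, ?_⟩
    have h7 : B.1 = homogeneousComponent c C * Φ := by rw [← h6]; ring
    have h8 : A.1 = -(homogeneousComponent c C * h) := by
      apply mul_right_cancel₀ hΦ0
      rw [h7] at h3
      linear_combination h3
    refine Prod.ext (Subtype.ext ?_) (Subtype.ext ?_)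
    · exact h8.symm
    · exact h7.symm
  have h9 := LinearMap.finrank_range_add_finrank_ker ψ
  rw [Module.finrank_prod] at h9
  have h10 := Submodule.finrank_mono h2
  have h11 := LinearMap.finrank_range_le φ
  omega

end bez

section bez2
open Classical

noncomputable def pev {K : Type} [Field K] (a b : K) : MvPolynomial (Fin 3) K →ₗ[K] K :=
  (MvPolynomial.aeval (![a, b, 1] : Fin 3 → K)).toLinearMap

noncomputable def dev {K : Type} [Field K] (a b α β : K) : MvPolynomial (Fin 3) K →ₗ[K] K :=
  α • (pev a b).comp (pderiv (0 : Fin 3) : Derivation K _ _).toLinearMap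
    + β • (pev a b).comp (pderiv (1 : Fin 3) : Derivation K _ _).toLinearMap

lemma pev_eq {K : Type} [Field K] (a b : K) (p : MvPolynomial (Fin 3) K) :
    pev a b p = eval ![a, b, 1] p := by
  simp [pev, MvPolynomial.aeval_eq_eval]

lemma pev_mul {K : Type} [Field K] (a b : K) (p r : MvPolynomial (Fin 3) K) :
    pev a b (p * r) = pev a b p * pev a b r := by
  simp [pev_eq]

lemma dev_eq {K : Type} [Field K] (a b α β : K) (p : MvPolynomial (Fin 3) K) :
    dev a b α β p = α * eval ![a, b, 1] (pderiv 0 p) + β * eval ![a, b, 1] (pderiv 1 p) := by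
  simp [dev, pev_eq]

lemma dev_mul {K : Type} [Field K] (a b α β : K) (p r : MvPolynomial (Fin 3) K) :
    dev a b α β (p * r) = pev a b p * dev a b α β r + pev a b r * dev a b α β p := by
  simp only [dev_eq, pev_eq, Derivation.leibniz, map_add, smul_eq_mul, map_mul]
  ring

noncomputable def dlt {K : Type} [Field K] (Q : ℕ) (a b : K) : MvPolynomial (Fin 3) K :=
  (X 2 ^ (Q - 1) - (X 0 - C a * X 2) ^ (Q - 1)) * (X 2 ^ (Q - 1) - (X 1 - C b * X 2) ^ (Q - 1))

lemma lin_hom {K : Type} [Field K] (j : Fin 3) (a : K) :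
    (X j - C a * X 2 : MvPolynomial (Fin 3) K).IsHomogeneous 1 := by
  refine (isHomogeneous_X _ _).sub ?_
  simpa using (isHomogeneous_X K (2 : Fin 3)).C_mul a

lemma dlt_hom {K : Type} [Field K] (Q : ℕ) (a b : K) :
    (dlt Q a b).IsHomogeneous ((Q - 1) + (Q - 1)) := by
  have h2 : (X 2 ^ (Q - 1) : MvPolynomial (Fin 3) K).IsHomogeneous (Q - 1) := by
    simpa using (isHomogeneous_X K (2 : Fin 3)).pow (Q - 1)
  refine IsHomogeneous.mul ?_ ?_
  · refine h2.sub ?_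
    simpa using (lin_hom (0 : Fin 3) a).pow (Q - 1)
  · refine h2.sub ?_
    simpa using (lin_hom (1 : Fin 3) b).pow (Q - 1)

lemma dlt_self {K : Type} [Field K] (Q : ℕ) (hQ : 2 ≤ Q) (a b : K) : pev a b (dlt Q a b) = 1 := by
  have : Q - 1 ≠ 0 := by omega
  simp [pev_eq, dlt, this]

lemma dlt_other {K : Type} [Field K] [Fintype K] (a b a' b' : K)
    (h : ¬ (a = a' ∧ b = b')) : pev a' b' (dlt (Fintype.card K) a b) = 0 := by
  simp only [pev_eq, dlt, map_mul, map_sub, map_pow, eval_X, eval_C]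
  by_cases h1 : a = a'
  · have h2 : b' - b ≠ 0 := by
      intro h2
      exact h ⟨h1, (sub_eq_zero.mp h2).symm⟩
    simp [FiniteField.pow_card_sub_one_eq_one _ h2]
  · have h2 : a' - a ≠ 0 := fun h2 => h1 (sub_eq_zero.mp h2).symm
    simp [FiniteField.pow_card_sub_one_eq_one _ h2]

set_option maxHeartbeats 1000000 in
lemma bezout2 {K : Type} [Field K] [Fintype K] (Φ h : MvPolynomial (Fin 3) K) (d e : ℕ)
    (hΦ : Φ.IsHomogeneous d) (hh : h.IsHomogeneous e) (hrel : IsRelPrime Φ h)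
    (hΦ0 : Φ ≠ 0) {ι : Type} [Fintype ι] (a b α β : ι → K)
    (hinj : ∀ i j, a i = a j → b i = b j → i = j) (hab : ∀ i, α i ≠ 0 ∨ β i ≠ 0)
    (h1 : ∀ i, pev (a i) (b i) Φ = 0) (h2 : ∀ i, pev (a i) (b i) h = 0)
    (h3 : ∀ i, dev (a i) (b i) (α i) (β i) Φ = 0) (h4 : ∀ i, dev (a i) (b i) (α i) (β i) h = 0) :
    2 * Fintype.card ι ≤ d * e := by
  set Q := Fintype.card K with hQ
  have hQ2 : 2 ≤ Q := Fintype.one_lt_card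
  set c := 4 * Q with hc
  set m := c + d + e with hm
  let ev : MvPolynomial (Fin 3) K →ₗ[K] (ι → K) × (ι → K) :=
    (LinearMap.pi fun i => pev (a i) (b i)).prod
      (LinearMap.pi fun i => dev (a i) (b i) (α i) (β i))
  let evm := ev.comp (homogeneousSubmodule (Fin 3) K m).subtype
  have hk := koszul Φ h d e c hΦ hh hrel hΦ0 (LinearMap.ker evm) (by
    intro A
    rw [LinearMap.mem_ker]
    change ev (A.1 * Φ) = 0
    refine Prod.ext (funext fun i => ?_) (funext fun i => ?_)
    · change pev _ _ _ = 0
      rw [pev_mul, h1, mul_zero]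
    · change dev _ _ _ _ _ = 0
      rw [dev_mul, h1, h3]; simp) (by
    intro A
    rw [LinearMap.mem_ker]
    change ev (A.1 * h) = 0
    refine Prod.ext (funext fun i => ?_) (funext fun i => ?_)
    · change pev _ _ _ = 0
      rw [pev_mul, h2, mul_zero]
    · change dev _ _ _ _ _ = 0
      rw [dev_mul, h2, h4]; simp)
  let k := m - 4 * (Q - 1) - 1
  have hkm : (Q - 1 + (Q - 1)) + (Q - 1 + (Q - 1)) + k + 1 = m := by omega
  have hT : ∀ (i : ι) (l : MvPolynomial (Fin 3) K), l.IsHomogeneous 1 →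
      (Pi.single i (pev (a i) (b i) l), Pi.single i (dev (a i) (b i) (α i) (β i)
        (dlt Q (a i) (b i) * dlt Q (a i) (b i) * X 2 ^ k * l))) ∈ LinearMap.range evm := by
    intro i l hl
    have hhom : (dlt Q (a i) (b i) * dlt Q (a i) (b i) * X 2 ^ k * l).IsHomogeneous m := by
      rw [← hkm]
      refine IsHomogeneous.mul (IsHomogeneous.mul (IsHomogeneous.mul (dlt_hom _ _ _) (dlt_hom _ _ _)) ?_) hl
      simpa using (isHomogeneous_X K (2 : Fin 3)).pow k
    have hne : ∀ j, j ≠ i → pev (a j) (b j) (dlt Q (a i) (b i)) = 0 := by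
      intro j hij
      rw [hQ, dlt_other]
      rintro ⟨r1, r2⟩; exact hij (hinj _ _ r1.symm r2.symm)
    have e1 : (fun j => pev (a j) (b j) (dlt Q (a i) (b i) * dlt Q (a i) (b i) * X 2 ^ k * l))
        = (Pi.single i (pev (a i) (b i) l) : ι → K) := by
      funext j
      by_cases hij : j = i
      · subst hij
        simp only [pev_mul, dlt_self Q hQ2, Pi.single_eq_same]
        simp [pev_eq]
      · simp only [pev_mul]
        rw [hne j hij, Pi.single_eq_of_ne hij]
        ring
    have e2 : (fun j => dev (a j) (b j) (α j) (β j)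
          (dlt Q (a i) (b i) * dlt Q (a i) (b i) * X 2 ^ k * l))
        = (Pi.single i (dev (a i) (b i) (α i) (β i)
            (dlt Q (a i) (b i) * dlt Q (a i) (b i) * X 2 ^ k * l)) : ι → K) := by
      funext j
      by_cases hij : j = i
      · subst hij
        simp only [Pi.single_eq_same]
      · rw [Pi.single_eq_of_ne hij]
        simp only [dev_mul, pev_mul]
        rw [hne j hij]
        ring
    generalize dlt Q (a i) (b i) * dlt Q (a i) (b i) * X 2 ^ k * l = p at *
    rw [← e1, ← e2]
    exact ⟨⟨p, hhom⟩, rfl⟩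
  -- directional value of the product with a linear form vanishing at the point
  have hD : ∀ (i : ι) (l : MvPolynomial (Fin 3) K), pev (a i) (b i) l = 0 →
      dev (a i) (b i) (α i) (β i) (dlt Q (a i) (b i) * dlt Q (a i) (b i) * X 2 ^ k * l)
        = dev (a i) (b i) (α i) (β i) l := by
    intro i l hl
    rw [dev_mul, hl]
    simp only [pev_mul, dlt_self Q hQ2]
    simp [pev_eq]
  have hS2 : ∀ (i : ι) (r : K), ((0 : ι → K), Pi.single i r) ∈ LinearMap.range evm := by
    intro i r
    have : ∃ s : K, s ≠ 0 ∧ ((0 : ι → K), Pi.single i s) ∈ LinearMap.range evm := by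
      rcases hab i with hα | hβ
      · refine ⟨α i, hα, ?_⟩
        have hv : pev (a i) (b i) (X 0 - C (a i) * X 2) = 0 := by simp [pev_eq]
        have := hT i _ (lin_hom (0 : Fin 3) (a i))
        rw [hD i _ hv, hv] at this
        simpa [dev_eq, pderiv_X, Pi.single_apply] using this
      · refine ⟨β i, hβ, ?_⟩
        have hv : pev (a i) (b i) (X 1 - C (b i) * X 2) = 0 := by simp [pev_eq]
        have := hT i _ (lin_hom (1 : Fin 3) (b i))
        rw [hD i _ hv, hv] at this
        simpa [dev_eq, pderiv_X, Pi.single_apply] using this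
    obtain ⟨s, hs, hmem⟩ := this
    have := Submodule.smul_mem _ (r / s) hmem
    simpa [← Pi.single_smul, hs] using this
  have hS1 : ∀ (i : ι) (r : K), (Pi.single i r, (0 : ι → K)) ∈ LinearMap.range evm := by
    intro i r
    have h0 := hT i (X 2) (isHomogeneous_X _ _)
    have h5 := Submodule.sub_mem _ h0 (hS2 i (dev (a i) (b i) (α i) (β i)
        (dlt Q (a i) (b i) * dlt Q (a i) (b i) * X 2 ^ k * X 2)))
    have h6 := Submodule.smul_mem _ r h5
    have h7 : pev (a i) (b i) (X 2) = 1 := by simp [pev_eq]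
    rw [h7] at h6
    simpa [← Pi.single_smul] using h6
  have hsurj : LinearMap.range evm = ⊤ := by
    rw [eq_top_iff]
    rintro ⟨u, w⟩ -
    have : (u, w) = ∑ i, (Pi.single i (u i), (0 : ι → K)) + ∑ i, ((0 : ι → K), Pi.single i (w i)) := by
      refine Prod.ext ?_ ?_
      · simp [Prod.fst_sum, Finset.univ_sum_single]
      · simp [Prod.snd_sum, Finset.univ_sum_single]
    rw [this]
    exact Submodule.add_mem _ (Submodule.sum_mem _ fun i _ => hS1 i _)
      (Submodule.sum_mem _ fun i _ => hS2 i _)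
  have hrn := LinearMap.finrank_range_add_finrank_ker evm
  rw [hsurj, finrank_top, Module.finrank_prod, Module.finrank_fintype_fun_eq_card] at hrn
  have d1 := homogDim (K := K) m
  have d2 := homogDim (K := K) (c + e)
  have d3 := homogDim (K := K) (c + d)
  have d4 := homogDim (K := K) c
  have hfin : (m + 1) * (m + 2) + (c + 1) * (c + 2)
      = (c + e + 1) * (c + e + 2) + (c + d + 1) * (c + d + 2) + 2 * (d * e) := by rw [hm]; ring
  linarith

end bez2

section plane
open Classical

noncomputable def hpol {K : Type} [Field K] (Q : ℕ) (Φ : MvPolynomial (Fin 3) K) :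
    MvPolynomial (Fin 3) K := ∑ i, X i ^ Q * pderiv i Φ

lemma hpol_hom {K : Type} [Field K] (Q q : ℕ) (Φ : MvPolynomial (Fin 3) K)
    (hΦ : Φ.IsHomogeneous (q + 1)) : (hpol Q Φ).IsHomogeneous (Q + q) := by
  unfold hpol
  refine IsHomogeneous.sum _ _ _ fun i _ => ?_
  refine IsHomogeneous.mul ?_ (by simpa using hΦ.pderiv)
  simpa using (isHomogeneous_X K i).pow Q

lemma hpol_pev {K : Type} [Field K] [Fintype K] (q : ℕ) (hq0 : (q : K) = 0)
    (Φ : MvPolynomial (Fin 3) K) (hΦ : Φ.IsHomogeneous (q + 1)) (v : Fin 3 → K) :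
    eval v (hpol (Fintype.card K) Φ) = eval v Φ := by
  have h := congrArg (eval v) hΦ.sum_X_mul_pderiv
  unfold hpol
  simp only [map_sum, map_mul, map_pow, eval_X, FiniteField.pow_card] at h ⊢
  rw [h]
  simp [hq0]

lemma hpol_dev {K : Type} [Field K] [Fintype K] (q : ℕ) (hq0 : (q : K) = 0)
    (Φ : MvPolynomial (Fin 3) K) (hΦ : Φ.IsHomogeneous (q + 1)) (v : Fin 3 → K) (j : Fin 3) :
    eval v (pderiv j (hpol (Fintype.card K) Φ)) = 0 := by
  have h := congrArg (fun p => eval v (pderiv j p)) hΦ.sum_X_mul_pderiv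
  have hQ : ((Fintype.card K : ℕ) : K) = 0 := by simp
  unfold hpol
  simp only [map_sum, Derivation.leibniz, Derivation.leibniz_pow, map_add, smul_eq_mul, map_mul,
    nsmul_eq_mul, map_natCast, hQ, zero_mul, mul_zero, add_zero, map_pow, eval_X,
    FiniteField.pow_card, Finset.sum_add_distrib] at h ⊢
  have e : ∑ x : Fin 3, eval v (pderiv x Φ) * eval v (pderiv j (X x)) = eval v (pderiv j Φ) := by
    simp [pderiv_X, Pi.single_apply]
  rw [e] at h
  simp [hq0] at h
  simpa using h

lemma theta_deriv {K : Type} [Field K] (p : MvPolynomial (Fin 3) K) :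
    Polynomial.derivative (aeval ![Polynomial.X, 1, 0] p : Polynomial K) =
      aeval ![Polynomial.X, 1, 0] (pderiv 0 p) := by
  induction p using MvPolynomial.induction_on with
  | C r => simp only [aeval_C, Polynomial.algebraMap_eq, Polynomial.derivative_C, pderiv_C, map_zero]
  | add p q hp hq => simp only [map_add, hp, hq]
  | mul_X p i hp =>
    simp only [map_mul, Polynomial.derivative_mul, hp, Derivation.leibniz, map_add, smul_eq_mul,
      aeval_X]
    fin_cases i <;> simp [pderiv_X, Pi.single_apply] <;> ring

lemma coprime_of_no_root {K : Type} [Field K] [Fintype K] (u : Polynomial K)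
    (hu : ∀ a, u.eval a ≠ 0) : IsCoprime u (Polynomial.X ^ Fintype.card K - Polynomial.X) := by
  have hm : (Polynomial.X ^ Fintype.card K - Polynomial.X : Polynomial K).Monic := by
    apply Polynomial.monic_X_pow_sub
    rw [Polynomial.degree_X]
    exact_mod_cast Fintype.one_lt_card
  have hr := FiniteField.roots_X_pow_card_sub_X K
  have hp := Polynomial.prod_multiset_X_sub_C_of_monic_of_roots_card_eq hm (by
    rw [hr, FiniteField.X_pow_card_sub_X_natDegree_eq K Fintype.one_lt_card]; simp)
  rw [← hp, hr]
  change IsCoprime u (∏ a : K, (Polynomial.X - Polynomial.C a))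
  refine IsCoprime.prod_right fun a _ => ?_
  apply IsCoprime.symm
  rw [(Polynomial.irreducible_X_sub_C a).coprime_iff_not_dvd, Polynomial.dvd_iff_isRoot]
  exact hu a

lemma PL2 {K : Type} [Field K] [Fintype K] (q : ℕ) (hq0 : (q : K) = 0)
    (Φ : MvPolynomial (Fin 3) K) (hΦ : Φ.IsHomogeneous (q + 1))
    (hext : ∀ s t : K, ¬ (s = 0 ∧ t = 0) → eval ![s, t, 0] Φ ≠ 0)
    (hdvd : Φ ∣ hpol (Fintype.card K) Φ) : False := by
  set u : Polynomial K := aeval ![Polynomial.X, 1, 0] Φ with hu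
  have hul : u = linePoly Φ ![0, 1, 0] ![1, 0, 0] := by
    rw [hu, linePoly]
    congr 2
    funext i
    fin_cases i <;> simp
  have htd : Φ.totalDegree ≤ q + 1 := hΦ.totalDegree_le
  have hnd : u.natDegree ≤ q + 1 := by rw [hul]; exact linePoly_natDegree _ _ _ _ htd
  have hco : u.coeff (q + 1) ≠ 0 := by
    rw [hul, linePoly_coeff _ _ _ _ htd, homogeneousComponent_eq_self hΦ]
    exact hext 1 0 (by simp)
  have hroot : ∀ a, u.eval a ≠ 0 := by
    intro a
    rw [hul, linePoly_eval]
    have : (![0, 1, 0] + a • ![1, 0, 0] : Fin 3 → K) = ![a, 1, 0] := by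
      funext i; fin_cases i <;> simp
    rw [this]
    exact hext a 1 (by simp)
  have he := congrArg (aeval (![Polynomial.X, 1, 0] : Fin 3 → Polynomial K)) hΦ.sum_X_mul_pderiv
  have hh : aeval (![Polynomial.X, 1, 0] : Fin 3 → Polynomial K) (hpol (Fintype.card K) Φ)
      = (Polynomial.X ^ Fintype.card K - Polynomial.X) * Polynomial.derivative u + u := by
    rw [hu, theta_deriv]
    have hq1 : ((q : ℕ) : Polynomial K) = 0 := by
      rw [← map_natCast (Polynomial.C : K →+* Polynomial K), hq0, map_zero]
    simp [Fin.sum_univ_three, hq1] at he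
    simp [hpol, Fin.sum_univ_three]
    rw [← he]
    ring
  have h1 : u ∣ (Polynomial.X ^ Fintype.card K - Polynomial.X) * Polynomial.derivative u := by
    have h2 := map_dvd (aeval (![Polynomial.X, 1, 0] : Fin 3 → Polynomial K)) hdvd
    rw [hh, ← hu] at h2
    exact (dvd_add_left (dvd_refl u)).mp h2
  have h2 : u ∣ Polynomial.derivative u := (coprime_of_no_root u hroot).dvd_of_dvd_mul_left h1
  have h3 : Polynomial.derivative u ≠ 0 := by
    intro h
    have := congrArg (fun p => Polynomial.coeff p q) h
    simp [Polynomial.coeff_derivative, hq0] at this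
    exact hco this
  have h4 := Polynomial.natDegree_le_of_dvd h2 h3
  have h5 := Polynomial.natDegree_derivative_lt (p := u) (by
    have := Polynomial.le_natDegree_of_ne_zero hco
    omega)
  omega

lemma PL1a {K : Type} [Field K] [Fintype K] (D : MvPolynomial (Fin 3) K) (d : ℕ) (hd1 : 1 ≤ d)
    (hd : D.totalDegree ≤ d)
    (hl : ∀ a b s t : K, ¬ (s = 0 ∧ t = 0) → linePoly D ![a, b, 1] ![s, t, 0] ≠ 0) :
    (Finset.univ.filter (fun x : K × K => eval ![x.1, x.2, 1] D = 0)).card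
      ≤ (d - 1) * (Fintype.card K + 1) + 1 := by
  by_cases hO : ∃ x : K × K, eval ![x.1, x.2, 1] D = 0
  · obtain ⟨⟨a, b⟩, hab⟩ := hO
    simp only at hab
    let dir : Option K → K × K := fun o => o.elim (0, 1) (fun m => (1, m))
    have hdir : ∀ o, ¬ ((dir o).1 = 0 ∧ (dir o).2 = 0) := by
      intro o; cases o <;> simp [dir]
    have hform : ∀ (s t l : K), (![a, b, 1] + l • ![s, t, 0] : Fin 3 → K) = ![a + l * s, b + l * t, 1] := by
      intro s t l
      funext i; fin_cases i <;> simp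
    let piece : Option K → Finset (K × K) := fun o =>
      ((Finset.univ.filter (fun l : K => eval ![a + l * (dir o).1, b + l * (dir o).2, 1] D = 0)).erase 0).image
        (fun l => (a + l * (dir o).1, b + l * (dir o).2))
    have hpiece : ∀ o, (piece o).card ≤ d - 1 := by
      intro o
      refine le_trans Finset.card_image_le ?_
      rw [Finset.card_erase_of_mem (by simp [hab])]
      have := poly_count _ d (linePoly_natDegree D _ _ d hd) (hl a b _ _ (hdir o))
      simp_rw [linePoly_eval, hform] at this
      omega
    have hsub : (Finset.univ.filter (fun x : K × K => eval ![x.1, x.2, 1] D = 0)) ⊆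
        insert (a, b) ((Finset.univ : Finset (Option K)).biUnion piece) := by
      rintro ⟨x, y⟩ hxy
      simp only [Finset.mem_filter, Finset.mem_univ, true_and] at hxy
      rw [Finset.mem_insert, Finset.mem_biUnion]
      by_cases hx : x = a
      · by_cases hy : y = b
        · left; rw [hx, hy]
        · right
          refine ⟨none, Finset.mem_univ _, ?_⟩
          simp only [piece, dir, Finset.mem_image, Finset.mem_erase, Finset.mem_filter]
          refine ⟨y - b, ⟨sub_ne_zero.mpr hy, Finset.mem_univ _, ?_⟩, ?_⟩
          · subst hx; simpa using hxy
          · simp [hx]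
      · right
        have hxa : x - a ≠ 0 := sub_ne_zero.mpr hx
        refine ⟨some ((y - b) / (x - a)), Finset.mem_univ _, ?_⟩
        simp only [piece, dir, Finset.mem_image, Finset.mem_erase, Finset.mem_filter]
        have e1 : b + (x - a) * ((y - b) / (x - a)) = y := by field_simp; ring
        refine ⟨x - a, ⟨hxa, Finset.mem_univ _, ?_⟩, ?_⟩
        · simp only [Option.elim, e1, mul_one, add_sub_cancel]; exact hxy
        · simp only [Option.elim, e1, mul_one, add_sub_cancel]
    refine le_trans (Finset.card_le_card hsub) (le_trans (Finset.card_insert_le _ _) ?_)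
    have := Finset.card_biUnion_le_card_mul (Finset.univ : Finset (Option K)) piece (d - 1)
      (fun o _ => hpiece o)
    simp only [Finset.card_univ, Fintype.card_option] at this
    rw [mul_comm] at this
    omega
  · push Not at hO
    rw [Finset.filter_false_of_mem (fun x _ => hO x)]
    simp

lemma PL1 {K : Type} [Field K] [Fintype K] (q : ℕ) (hq : 3 ≤ q) (hK : Fintype.card K = q ^ 2)
    (Φ : MvPolynomial (Fin 3) K) (hΦ : Φ.IsHomogeneous (q + 1))
    (hext : ∀ s t : K, ¬ (s = 0 ∧ t = 0) → eval ![s, t, 0] Φ ≠ 0)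
    (D E : MvPolynomial (Fin 3) K) (hDE : Φ = D * E) (hD : ¬ IsUnit D) (hE : ¬ IsUnit E) :
    (Finset.univ.filter (fun x : K × K => eval ![x.1, x.2, 1] Φ = 0)).card < q ^ 3 := by
  have hΦ0 : Φ ≠ 0 := by
    rintro rfl
    exact hext 1 0 (by simp) (by simp)
  have hD0 : D ≠ 0 := by rintro rfl; simp at hDE; exact hΦ0 hDE
  have hE0 : E ≠ 0 := by rintro rfl; simp at hDE; exact hΦ0 hDE
  have hdeg : D.totalDegree + E.totalDegree = q + 1 := by
    rw [← totalDegree_mul_of_isDomain hD0 hE0, ← hDE, hΦ.totalDegree hΦ0]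
  have hnu : ∀ A : MvPolynomial (Fin 3) K, A ≠ 0 → ¬ IsUnit A → 1 ≤ A.totalDegree := by
    intro A hA0 hA
    by_contra hcon
    have h0 : A.totalDegree = 0 := by omega
    rw [totalDegree_eq_zero_iff_eq_C] at h0
    apply hA
    rw [h0] at hA0 ⊢
    refine IsUnit.map C (IsUnit.mk0 _ ?_)
    intro h; rw [h] at hA0; simp at hA0
  have hline : ∀ a b s t : K, ¬ (s = 0 ∧ t = 0) →
      linePoly D ![a, b, 1] ![s, t, 0] * linePoly E ![a, b, 1] ![s, t, 0] ≠ 0 := by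
    intro a b s t hst h
    have : linePoly Φ ![a, b, 1] ![s, t, 0] = 0 := by
      rw [hDE]; simpa [linePoly] using h
    have h2 := linePoly_coeff Φ ![a, b, 1] ![s, t, 0] (q + 1) hΦ.totalDegree_le
    rw [this, homogeneousComponent_eq_self hΦ] at h2
    exact hext s t hst (by simpa using h2.symm)
  have b1 := PL1a D _ (hnu D hD0 hD) le_rfl (fun a b s t h => left_ne_zero_of_mul (hline a b s t h))
  have b2 := PL1a E _ (hnu E hE0 hE) le_rfl (fun a b s t h => right_ne_zero_of_mul (hline a b s t h))
  have hun : (Finset.univ.filter (fun x : K × K => eval ![x.1, x.2, 1] Φ = 0)) ⊆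
     (Finset.univ.filter (fun x : K × K => eval ![x.1, x.2, 1] D = 0)) ∪
     (Finset.univ.filter (fun x : K × K => eval ![x.1, x.2, 1] E = 0)) := by
    intro x hx
    simpa [hDE] using hx
  have b3 := le_trans (Finset.card_le_card hun) (Finset.card_union_le _ _)
  obtain ⟨d1, hd1⟩ : ∃ d1, D.totalDegree = d1 + 1 := ⟨D.totalDegree - 1, by have := hnu D hD0 hD; omega⟩
  obtain ⟨d2, hd2⟩ : ∃ d2, E.totalDegree = d2 + 1 := ⟨E.totalDegree - 1, by have := hnu E hE0 hE; omega⟩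
  rw [hd1, hK] at b1
  rw [hd2, hK] at b2
  have hs : d1 + d2 + 1 = q := by omega
  simp only [Nat.add_sub_cancel] at b1 b2
  have : d1 * (q ^ 2 + 1) + 1 + (d2 * (q ^ 2 + 1) + 1) < q ^ 3 := by
    subst hs
    nlinarith [sq_nonneg (d1 + d2)]
  omega

lemma plane_lemma {K : Type} [Field K] [Fintype K] (q : ℕ) (hq : 3 ≤ q) (hK : Fintype.card K = q ^ 2)
    (hq0 : (q : K) = 0)
    (Φ : MvPolynomial (Fin 3) K) (hΦ : Φ.IsHomogeneous (q + 1))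
    (hext : ∀ s t : K, ¬ (s = 0 ∧ t = 0) → eval ![s, t, 0] Φ ≠ 0) :
    (Finset.univ.filter (fun x : K × K => eval ![x.1, x.2, 1] Φ = 0)).card < q ^ 3 := by
  have hΦ0 : Φ ≠ 0 := by
    rintro rfl
    exact hext 1 0 (by simp) (by simp)
  by_cases hrel : IsRelPrime Φ (hpol (Fintype.card K) Φ)
  · have hdir : ∀ x : K × K, ∃ y : K × K, (y.1 ≠ 0 ∨ y.2 ≠ 0) ∧
        dev x.1 x.2 y.1 y.2 Φ = 0 := by
      intro x
      by_cases h0 : eval ![x.1, x.2, 1] (pderiv 0 Φ) = 0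
      · exact ⟨(1, 0), by simp, by simp [dev_eq, h0]⟩
      · refine ⟨(- eval ![x.1, x.2, 1] (pderiv 1 Φ), eval ![x.1, x.2, 1] (pderiv 0 Φ)),
          Or.inr h0, ?_⟩
        rw [dev_eq]; ring
    choose y hy1 hy2 using hdir
    have hb := bezout2 Φ (hpol (Fintype.card K) Φ) (q + 1) (Fintype.card K + q) hΦ
      (hpol_hom _ _ _ hΦ) hrel hΦ0
      (ι := {x : K × K // eval ![x.1, x.2, 1] Φ = 0})
      (fun i => i.1.1) (fun i => i.1.2) (fun i => (y i.1).1) (fun i => (y i.1).2)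
      (fun i j h1 h2 => Subtype.ext (Prod.ext h1 h2)) (fun i => hy1 _)
      (fun i => by rw [pev_eq]; exact i.2)
      (fun i => by rw [pev_eq, hpol_pev q hq0 Φ hΦ]; exact i.2)
      (fun i => hy2 _)
      (fun i => by rw [dev_eq, hpol_dev q hq0 Φ hΦ, hpol_dev q hq0 Φ hΦ]; simp)
    rw [Fintype.card_subtype, hK] at hb
    obtain ⟨r, rfl⟩ : ∃ r, q = r + 3 := ⟨q - 3, by omega⟩
    nlinarith [sq_nonneg r, Nat.zero_le (r ^ 3)]
  · unfold IsRelPrime at hrel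
    push Not at hrel
    obtain ⟨D, ⟨E, hE⟩, hDh, hDu⟩ := hrel
    by_cases hEu : IsUnit E
    · exfalso
      refine PL2 q hq0 Φ hΦ hext ?_
      rw [hE]
      rw [hE] at hDh
      exact (hEu.mul_right_dvd).mpr hDh
    · exact PL1 q hq hK Φ hΦ hext D E hE hDu hEu

/-- Coordinate-free version. -/
lemma plane_lemma' {K : Type} [Field K] [Fintype K] {n : ℕ} (q : ℕ) (hq : 3 ≤ q)
    (hK : Fintype.card K = q ^ 2) (hq0 : (q : K) = 0)
    (f : MvPolynomial (Fin n) K) (hf : f.IsHomogeneous (q + 1)) (u v o : Fin n → K)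
    (hext : ∀ s t : K, ¬ (s = 0 ∧ t = 0) → eval (s • u + t • v) f ≠ 0) :
    (Finset.univ.filter (fun x : K × K => eval (o + x.1 • u + x.2 • v) f = 0)).card < q ^ 3 := by
  set Φ : MvPolynomial (Fin 3) K :=
    aeval (fun i => C (u i) * X 0 + C (v i) * X 1 + C (o i) * X 2) f with hΦ
  have hhom : Φ.IsHomogeneous (q + 1) := by
    have := hf.aeval (n := 1) (fun i => C (u i) * X 0 + C (v i) * X 1 + C (o i) * X 2 :
      Fin n → MvPolynomial (Fin 3) K) (fun i => by
        refine IsHomogeneous.add (IsHomogeneous.add ?_ ?_) ?_ <;>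
        exact (isHomogeneous_X K _).C_mul _)
    rw [one_mul] at this
    exact this
  have hev : ∀ s t r : K, eval ![s, t, r] Φ = eval (r • o + s • u + t • v) f := by
    intro s t r
    have : ∀ g : MvPolynomial (Fin n) K, eval ![s, t, r]
      (aeval (fun i => C (u i) * X 0 + C (v i) * X 1 + C (o i) * X 2 :
        Fin n → MvPolynomial (Fin 3) K) g) = eval (r • o + s • u + t • v) g := by
      intro g
      induction g using MvPolynomial.induction_on with
      | C a => simp only [aeval_C, MvPolynomial.algebraMap_eq, eval_C]
      | add p q hp hq => simp only [map_add, hp, hq]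
      | mul_X p i hp =>
        simp only [map_mul, hp, aeval_X, eval_X, map_add, eval_C, Pi.add_apply, Pi.smul_apply,
          smul_eq_mul]
        simp
        left; ring
    exact this f
  have := plane_lemma q hq hK hq0 Φ hhom (by
    intro s t hst
    rw [hev]; simpa using hext s t hst)
  simp_rw [hev] at this
  simpa using this

end plane

section cnt
open Classical

lemma e_smul {F : Type} [Field F] {n d : ℕ} (f : MvPolynomial (Fin n) F) (hf : f.IsHomogeneous d)
    (c : F) (v : Fin n → F) : eval (c • v) f = c ^ d * eval v f := by
  rw [eval_eq', eval_eq', Finset.mul_sum]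
  refine Finset.sum_congr rfl fun s hs => ?_
  have h1 : s.degree = d := by
    by_contra h
    exact (mem_support_iff.mp hs) (hf.coeff_eq_zero h)
  have h2 : ∑ i, s i = d := by rw [← h1, Finsupp.degree_eq_sum]
  simp only [Pi.smul_apply, smul_eq_mul, mul_pow, Finset.prod_mul_distrib,
    Finset.prod_pow_eq_pow_sum, h2]
  ring

lemma e_smul_iff {F : Type} [Field F] {n d : ℕ} (f : MvPolynomial (Fin n) F)
    (hf : f.IsHomogeneous d) (c : F) (hc : c ≠ 0) (v : Fin n → F) :
    eval (c • v) f = 0 ↔ eval v f = 0 := by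
  rw [e_smul f hf]
  simp [hc]

lemma vz_ncard {F : Type} [Field F] [Fintype F] {n d : ℕ} (f : MvPolynomial (Fin n) F)
    (hf : f.IsHomogeneous (d + 1)) (W : Submodule F (Fin n → F)) :
    (Finset.univ.filter (fun x : Fin n → F => x ∈ W ∧ eval x f = 0)).card
      = 1 + (Fintype.card F - 1) * (hypersurfacePts f ∩ projPts W).ncard := by
  have : Finite (Projectivization F (Fin n → F)) := Quotient.finite _
  have : Fintype (Projectivization F (Fin n → F)) := Fintype.ofFinite _
  set T : Finset (Projectivization F (Fin n → F)) :=
    Finset.univ.filter (fun P => P ∈ hypersurfacePts f ∩ projPts W) with hT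
  have hTc : (hypersurfacePts f ∩ projPts W).ncard = T.card := by
    rw [← Set.ncard_coe_finset]
    congr 1
    ext P; simp [hT]
  have hmem : ∀ P, P ∈ T ↔ eval P.rep f = 0 ∧ P.rep ∈ W := by
    intro P
    simp [hT, hypersurfacePts, projPts, Projectivization.submodule_eq]
  have h0 : (0 : Fin n → F) ∈ Finset.univ.filter (fun x : Fin n → F => x ∈ W ∧ eval x f = 0) := by
    simp only [Finset.mem_filter, Finset.mem_univ, true_and, W.zero_mem]
    have := e_smul f hf 0 0
    simpa using this
  rw [← Finset.card_erase_add_one h0, add_comm, hTc, ← Fintype.card_units]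
  congr 1
  rw [mul_comm, ← Finset.card_univ (α := Fˣ), ← Finset.card_product]
  symm
  refine Finset.card_bij (fun x _ => (x.2 : F) • x.1.rep) ?_ ?_ ?_
  · rintro ⟨P, c⟩ hP
    rw [Finset.mem_product, hmem] at hP
    simp only [Finset.mem_erase, Finset.mem_filter, Finset.mem_univ, true_and]
    refine ⟨?_, W.smul_mem _ hP.1.2, ?_⟩
    · exact smul_ne_zero c.ne_zero P.rep_nonzero
    · exact (e_smul_iff f hf _ c.ne_zero _).mpr hP.1.1
  · rintro ⟨P, c⟩ hP ⟨P', c'⟩ hP' heq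
    simp only at heq
    have hPP : P = P' := by
      rw [← P.mk_rep, ← P'.mk_rep, Projectivization.mk_eq_mk_iff']
      refine ⟨(c : F)⁻¹ * c', ?_⟩
      rw [mul_smul, ← heq, smul_smul, inv_mul_cancel₀ c.ne_zero, one_smul]
    subst hPP
    have : (c : F) = c' := smul_left_injective F P.rep_nonzero heq
    rw [Prod.mk.injEq]
    exact ⟨rfl, Units.ext this⟩
  · intro x hx
    simp only [Finset.mem_erase, Finset.mem_filter, Finset.mem_univ, true_and] at hx
    obtain ⟨a, ha⟩ := Projectivization.exists_smul_eq_mk_rep F x hx.1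
    have ha' : (a : F) • x = (Projectivization.mk F x hx.1).rep := ha
    refine ⟨(Projectivization.mk F x hx.1, a⁻¹), ?_, ?_⟩
    · rw [Finset.mem_product, hmem]
      refine ⟨⟨?_, ?_⟩, Finset.mem_univ _⟩
      · rw [← ha']; exact (e_smul_iff f hf _ a.ne_zero _).mpr hx.2.2
      · rw [← ha']; exact W.smul_mem _ hx.2.1
    · simp only
      rw [← ha', smul_smul]
      simp

lemma vz_line {F : Type} [Field F] [Fintype F] {n d : ℕ} (f : MvPolynomial (Fin n) F)
    (hf : f.IsHomogeneous (d + 1)) (L : Submodule F (Fin n → F)) (v w : Fin n → F)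
    (hind : ∀ a b : F, a • w + b • v = 0 → a = 0 ∧ b = 0)
    (hL : ∀ x, x ∈ L ↔ ∃ a b : F, a • w + b • v = x) :
    (hypersurfacePts f ∩ projPts L).ncard =
      (Finset.univ.filter (fun l : F => eval (w + l • v) f = 0)).card
        + if eval v f = 0 then 1 else 0 := by
  have h1 := vz_ncard f hf L
  have e0 : eval (0 : Fin n → F) f = 0 := by simpa using e_smul f hf 0 0
  have h2 : (Finset.univ.filter (fun x : Fin n → F => x ∈ L ∧ eval x f = 0)).card =
      (Finset.univ.filter (fun x : F × F => eval (x.1 • w + x.2 • v) f = 0)).card := by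
    symm
    refine Finset.card_bij (fun x _ => x.1 • w + x.2 • v) ?_ ?_ ?_
    · intro x hx
      simp only [Finset.mem_filter, Finset.mem_univ, true_and] at hx ⊢
      exact ⟨(hL _).mpr ⟨_, _, rfl⟩, hx⟩
    · rintro ⟨a, b⟩ _ ⟨a', b'⟩ _ heq
      simp only at heq
      have := hind (a - a') (b - b') (by
        rw [sub_smul, sub_smul]
        have : a • w - a' • w + (b • v - b' • v) = (a • w + b • v) - (a' • w + b' • v) := by abel
        rw [this, heq, sub_self])
      rw [Prod.mk.injEq]
      exact ⟨sub_eq_zero.mp this.1, sub_eq_zero.mp this.2⟩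
    · intro x hx
      simp only [Finset.mem_filter, Finset.mem_univ, true_and] at hx
      obtain ⟨a, b, hab⟩ := (hL x).mp hx.1
      refine ⟨(a, b), ?_, hab⟩
      simp only [Finset.mem_filter, Finset.mem_univ, true_and]
      rw [hab]; exact hx.2
  have h3 : (Finset.univ.filter (fun x : F × F => eval (x.1 • w + x.2 • v) f = 0)).card =
      ∑ a : F, (Finset.univ.filter (fun b : F => eval (a • w + b • v) f = 0)).card := by
    simp_rw [Finset.card_filter]
    rw [Fintype.sum_prod_type]
  have h4 : ∀ a : F, a ≠ 0 → (Finset.univ.filter (fun b : F => eval (a • w + b • v) f = 0)).card =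
      (Finset.univ.filter (fun l : F => eval (w + l • v) f = 0)).card := by
    intro a ha
    symm
    refine Finset.card_bij (fun l _ => a * l) ?_ ?_ ?_
    · intro l hl
      simp only [Finset.mem_filter, Finset.mem_univ, true_and] at hl ⊢
      rw [mul_smul, ← smul_add]
      exact (e_smul_iff f hf a ha _).mpr hl
    · intro l _ l' _ h
      exact mul_left_cancel₀ ha h
    · intro b hb
      simp only [Finset.mem_filter, Finset.mem_univ, true_and] at hb
      refine ⟨a⁻¹ * b, ?_, by rw [mul_inv_cancel_left₀ ha]⟩
      simp only [Finset.mem_filter, Finset.mem_univ, true_and]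
      rw [← e_smul_iff f hf a ha, smul_add, smul_smul, mul_inv_cancel_left₀ ha]
      exact hb
  have h5 : (Finset.univ.filter (fun b : F => eval ((0 : F) • w + b • v) f = 0)).card =
      1 + (Fintype.card F - 1) * (if eval v f = 0 then 1 else 0) := by
    have hpos : 0 < Fintype.card F := Fintype.card_pos
    by_cases hv : eval v f = 0
    · rw [if_pos hv, Finset.filter_true_of_mem]
      · rw [Finset.card_univ]; omega
      · intro b _
        rw [zero_smul, zero_add, e_smul f hf, hv, mul_zero]
    · rw [if_neg hv, mul_zero, add_zero, Finset.card_eq_one]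
      refine ⟨0, ?_⟩
      ext b
      simp only [Finset.mem_filter, Finset.mem_univ, true_and, Finset.mem_singleton, zero_smul,
        zero_add]
      constructor
      · intro h
        by_contra hb
        exact hv ((e_smul_iff f hf b hb v).mp h)
      · rintro rfl; simpa using e0
  rw [h2, h3, ← Finset.add_sum_erase _ _ (Finset.mem_univ (0 : F)), h5,
    Finset.sum_congr rfl (fun a ha => h4 a (Finset.ne_of_mem_erase ha)), Finset.sum_const,
    Finset.card_erase_of_mem (Finset.mem_univ _), Finset.card_univ, smul_eq_mul, add_assoc,
    ← mul_add] at h1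
  have hpos : 0 < Fintype.card F - 1 := by
    have := Fintype.one_lt_card (α := F); omega
  have := Nat.eq_of_mul_eq_mul_left hpos (Nat.add_left_cancel h1)
  omega

lemma sub_card {F : Type} [Field F] [Fintype F] {n : ℕ} (W : Submodule F (Fin n → F)) :
    (Finset.univ.filter (fun x : Fin n → F => x ∈ W)).card = Fintype.card F ^ finrank F W := by
  rw [← Module.card_eq_pow_finrank (K := F) (V := W), ← Fintype.card_subtype]

/-- number of zeros in the translate w + W -/
noncomputable def Ucnt {F : Type} [Field F] [Fintype F] {n : ℕ} (f : MvPolynomial (Fin n) F)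
    (W : Submodule F (Fin n → F)) (w : Fin n → F) : ℕ :=
  (Finset.univ.filter (fun x : Fin n → F => x ∈ W ∧ eval (w + x) f = 0)).card

lemma Ucnt_mem {F : Type} [Field F] [Fintype F] {n : ℕ} (f : MvPolynomial (Fin n) F)
    (W : Submodule F (Fin n → F)) (w w0 : Fin n → F) (hw : w0 ∈ W) :
    Ucnt f W (w + w0) = Ucnt f W w := by
  unfold Ucnt
  refine Finset.card_bij (fun x _ => w0 + x) ?_ ?_ ?_
  · intro x hx
    simp only [Finset.mem_filter, Finset.mem_univ, true_and] at hx ⊢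
    exact ⟨W.add_mem hw hx.1, by rw [← add_assoc]; exact hx.2⟩
  · intro x _ y _ h
    exact add_left_cancel h
  · intro x hx
    simp only [Finset.mem_filter, Finset.mem_univ, true_and] at hx
    refine ⟨x - w0, ?_, by simp⟩
    simp only [Finset.mem_filter, Finset.mem_univ, true_and]
    exact ⟨W.sub_mem hx.1 hw, by simpa [add_assoc] using hx.2⟩

lemma Ucnt_sum {F : Type} [Field F] [Fintype F] {n : ℕ} (f : MvPolynomial (Fin n) F)
    (W : Submodule F (Fin n → F)) :
    ∑ w, Ucnt f W w = Fintype.card F ^ finrank F W *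
      (Finset.univ.filter (fun x : Fin n → F => eval x f = 0)).card := by
  unfold Ucnt
  simp_rw [Finset.card_filter, ite_and]
  rw [Finset.sum_comm]
  have : ∀ x : Fin n → F, (∑ w : Fin n → F, if x ∈ W then (if eval (w + x) f = 0 then 1 else 0) else 0)
      = if x ∈ W then ∑ w : Fin n → F, (if eval w f = 0 then 1 else 0) else 0 := by
    intro x
    split_ifs
    · exact Fintype.sum_equiv (Equiv.addRight x) _ _ (fun y => rfl)
    · simp
  simp_rw [this]
  rw [← Finset.sum_filter, Finset.sum_const, sub_card, smul_eq_mul]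

/-- averaging -/
lemma avg {F : Type} [Field F] [Fintype F] (q : ℕ) (hq : 2 ≤ q) (hK : Fintype.card F = q ^ 2)
    (f : MvPolynomial (Fin 7) F) (W : Submodule F (Fin 7 → F)) (hW : finrank F W = 4)
    (h1 : (Finset.univ.filter (fun x : Fin 7 → F => eval x f = 0)).card + q ^ 7 = q ^ 13 + q ^ 6)
    (h2 : (Finset.univ.filter (fun x : Fin 7 → F => x ∈ W ∧ eval x f = 0)).card = q ^ 6)
    (hle : ∀ w, w ∉ W → Ucnt f W w ≤ q ^ 7) : ∀ w, w ∉ W → Ucnt f W w = q ^ 7 := by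
  have hs := Ucnt_sum f W
  rw [hW, hK] at hs
  rw [← Finset.sum_filter_add_sum_filter_not Finset.univ (fun w => w ∈ W)] at hs
  have hc := sub_card W
  rw [hW, hK] at hc
  have hin : ∀ w ∈ Finset.univ.filter (fun w => w ∈ W), Ucnt f W w = q ^ 6 := by
    intro w hw
    simp only [Finset.mem_filter, Finset.mem_univ, true_and] at hw
    have := Ucnt_mem f W 0 w hw
    rw [zero_add] at this
    rw [this, Ucnt, ← h2]
    simp only [zero_add]
  rw [Finset.sum_congr rfl hin, Finset.sum_const, hc, smul_eq_mul] at hs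
  have hn : (Finset.univ.filter (fun w => w ∉ W)).card + (q ^ 2) ^ 4 = (q ^ 2) ^ 7 := by
    rw [← hc, add_comm, Finset.card_filter_add_card_filter_not]
    simp [hK]
  have heq : ∑ w ∈ Finset.univ.filter (fun w => w ∉ W), Ucnt f W w =
      ∑ w ∈ Finset.univ.filter (fun w => w ∉ W), q ^ 7 := by
    rw [Finset.sum_const, smul_eq_mul]
    zify at hs h1 hn ⊢
    linear_combination hs + (q ^ 2 : ℤ) ^ 4 * h1 - (q : ℤ) ^ 7 * hn
  intro w hw
  exact (Finset.sum_eq_sum_iff_of_le (fun w hw => hle w (by simpa using hw))).mp heq w (by simpa using hw)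

end cnt

section dich
open Classical

/-- restriction of `f` to the affine 3-space `w + ⟨b⟩` -/
noncomputable def Gp {F : Type} [Field F] {n : ℕ} (f : MvPolynomial (Fin n) F)
    (b : Fin 3 → Fin n → F) (w : Fin n → F) : MvPolynomial (Fin 3) F :=
  aeval (fun i => C (w i) + ∑ j, C (b j i) * X j) f

noncomputable def Bm {F : Type} [Field F] {n : ℕ} (b : Fin 3 → Fin n → F) :
    (Fin 3 → F) →ₗ[F] (Fin n → F) := Fintype.linearCombination F b

lemma Bm_apply {F : Type} [Field F] {n : ℕ} (b : Fin 3 → Fin n → F) (y : Fin 3 → F) (i : Fin n) :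
    Bm b y i = ∑ j, b j i * y j := by
  simp [Bm, Fintype.linearCombination_apply, mul_comm]

lemma Gp_eval {F : Type} [Field F] {n : ℕ} (f : MvPolynomial (Fin n) F)
    (b : Fin 3 → Fin n → F) (w : Fin n → F) (y : Fin 3 → F) :
    eval y (Gp f b w) = eval (w + Bm b y) f := by
  unfold Gp
  induction f using MvPolynomial.induction_on with
  | C a => simp only [aeval_C, MvPolynomial.algebraMap_eq, eval_C]
  | add p q hp hq => simp only [map_add, hp, hq]
  | mul_X p i hp =>
    simp only [map_mul, hp, aeval_X, eval_X, map_add, eval_C, Pi.add_apply, map_sum, Bm_apply]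

lemma Gp_line {F : Type} [Field F] {n : ℕ} (f : MvPolynomial (Fin n) F)
    (b : Fin 3 → Fin n → F) (w : Fin n → F) (P : Fin 3 → F) :
    linePoly (Gp f b w) 0 P = linePoly f w (Bm b P) := by
  unfold Gp linePoly
  induction f using MvPolynomial.induction_on with
  | C a => simp only [aeval_C, MvPolynomial.algebraMap_eq]
  | add p q hp hq => simp only [map_add, hp, hq]
  | mul_X p i hp =>
    rw [map_mul, map_mul, hp, map_mul]
    congr 1
    simp only [map_mul, aeval_X, map_add, map_sum, Bm_apply, aeval_C, Polynomial.algebraMap_eq,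
      Pi.zero_apply, map_zero, zero_add, Finset.sum_mul, mul_assoc]

lemma Gp_totalDegree {F : Type} [Field F] {n : ℕ} (f : MvPolynomial (Fin n) F) (d : ℕ)
    (hf : f.totalDegree ≤ d) (b : Fin 3 → Fin n → F) (w : Fin n → F) :
    (Gp f b w).totalDegree ≤ d := by
  unfold Gp
  rw [← support_sum_monomial_coeff f, map_sum]
  refine totalDegree_finsetSum_le fun s hs => ?_
  rw [aeval_monomial]
  refine le_trans (totalDegree_mul _ _) ?_
  rw [MvPolynomial.algebraMap_eq, totalDegree_C, zero_add, Finsupp.prod]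
  refine le_trans (totalDegree_finsetProd _ _) ?_
  refine le_trans (Finset.sum_le_sum (g := fun i => s i) fun i _ => ?_) ?_
  · refine le_trans (totalDegree_pow _ _) ?_
    have : (C (w i) + ∑ j, C (b j i) * X j : MvPolynomial (Fin 3) F).totalDegree ≤ 1 := by
      refine le_trans (totalDegree_add _ _) (max_le ?_ ?_)
      · rw [totalDegree_C]; omega
      · refine totalDegree_finsetSum_le fun j _ => ?_
        refine le_trans (totalDegree_mul _ _) ?_
        rw [totalDegree_C, totalDegree_X]
    calc _ ≤ s i * 1 := Nat.mul_le_mul_left _ this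
      _ = s i := mul_one _
  · exact le_trans (le_totalDegree hs) hf

lemma caseA {F : Type} [Field F] [Fintype F] (q : ℕ) (hq : 3 ≤ q) (hK : Fintype.card F = q ^ 2)
    (hq0 : (q : F) = 0)
    (f : MvPolynomial (Fin 7) F) (hf : f.IsHomogeneous (q + 1))
    (W : Submodule F (Fin 7 → F)) (hW : finrank F W = 4) (u v : Fin 7 → F) (hu : u ∈ W) (hv : v ∈ W)
    (hext : ∀ s t : F, ¬ (s = 0 ∧ t = 0) → eval (s • u + t • v) f ≠ 0) (w : Fin 7 → F) :
    Ucnt f W w < q ^ 7 := by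
  have h1 : ∑ x0 ∈ Finset.univ.filter (fun x => x ∈ W), (Finset.univ.filter
      (fun x : F × F => eval ((w + x0) + x.1 • u + x.2 • v) f = 0)).card
      = Fintype.card F ^ 2 * Ucnt f W w := by
    have : ∀ x : F × F, (∑ x0 ∈ Finset.univ.filter (fun x => x ∈ W),
        if eval ((w + x0) + x.1 • u + x.2 • v) f = 0 then 1 else 0) = Ucnt f W w := by
      intro x
      rw [← Ucnt_mem f W w (x.1 • u + x.2 • v)
        (W.add_mem (W.smul_mem _ hu) (W.smul_mem _ hv)), Ucnt, ← Finset.card_filter,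
        Finset.filter_filter]
      congr 1
      ext x0
      simp only [Finset.mem_filter, Finset.mem_univ, true_and]
      rw [show w + x0 + x.1 • u + x.2 • v = w + (x.1 • u + x.2 • v) + x0 by abel]
    simp_rw [Finset.card_filter _ (Finset.univ : Finset (F × F))]
    rw [Finset.sum_comm]
    simp_rw [this]
    simp [sq]
  have h2 : ∑ x0 ∈ Finset.univ.filter (fun x => x ∈ W), (Finset.univ.filter
      (fun x : F × F => eval ((w + x0) + x.1 • u + x.2 • v) f = 0)).card
      < ∑ x0 ∈ Finset.univ.filter (fun x => x ∈ W), q ^ 3 := by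
    refine Finset.sum_lt_sum_of_nonempty ⟨0, by simp⟩ fun x0 _ => ?_
    exact plane_lemma' q hq hK hq0 f hf u v (w + x0) hext
  rw [h1, Finset.sum_const, sub_card, hW, smul_eq_mul, hK] at h2
  have h3 : (q ^ 2) ^ 2 * Ucnt f W w < (q ^ 2) ^ 2 * q ^ 7 := by
    calc _ < _ := h2
      _ = _ := by ring
  exact lt_of_mul_lt_mul_left h3 (Nat.zero_le _)

lemma caseB_add {F : Type} [Field F] [Fintype F] (q : ℕ) (hK : Fintype.card F = q ^ 2)
    (f : MvPolynomial (Fin 7) F) (hf : f.IsHomogeneous (q + 1))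
    (W : Submodule F (Fin 7 → F)) (hW : finrank F W = 4)
    (h2 : (Finset.univ.filter (fun x : Fin 7 → F => x ∈ W ∧ eval x f = 0)).card = q ^ 6)
    (hB : ∀ u v, u ∈ W → v ∈ W → ∃ s t : F, ¬ (s = 0 ∧ t = 0) ∧ eval (s • u + t • v) f = 0)
    (u v : Fin 7 → F) (hu : u ∈ W) (hv : v ∈ W) (hu0 : eval u f = 0) (hv0 : eval v f = 0) :
    eval (u + v) f = 0 := by
  by_contra hR
  set R := u + v with hRd
  have hRW : R ∈ W := W.add_mem hu hv
  let Z := {x : Fin 7 → F // x ∈ W ∧ eval x f = 0}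
  let g : Z × F → W := fun x => ⟨x.1.1 + x.2 • R, W.add_mem x.1.2.1 (W.smul_mem _ hRW)⟩
  have hsurj : Function.Surjective g := by
    rintro ⟨x, hx⟩
    obtain ⟨s, t, hst, he⟩ := hB x R hx hRW
    have hs : s ≠ 0 := by
      rintro rfl
      have ht : t ≠ 0 := fun h => hst ⟨rfl, h⟩
      rw [zero_smul, zero_add, e_smul_iff f hf t ht] at he
      exact hR he
    have hz : eval (x + (s⁻¹ * t) • R) f = 0 := by
      rw [← e_smul_iff f hf s hs, smul_add, smul_smul, mul_inv_cancel_left₀ hs]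
      exact he
    refine ⟨(⟨x + (s⁻¹ * t) • R, W.add_mem hx (W.smul_mem _ hRW), hz⟩, -(s⁻¹ * t)), ?_⟩
    apply Subtype.ext
    simp [g]
  have hcard : Fintype.card (Z × F) = Fintype.card W := by
    rw [Fintype.card_prod, Fintype.card_subtype, h2, Module.card_eq_pow_finrank (K := F) (V := W), hW, hK]
    ring
  have hbij := (Fintype.bijective_iff_surjective_and_card g).mpr ⟨hsurj, hcard⟩
  have hmv : eval (-v) f = 0 := by
    have := e_smul_iff f hf (-1) (by simp) v
    rw [neg_one_smul] at this
    exact this.mpr hv0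
  have := @hbij.1 (⟨u, hu, hu0⟩, -1) (⟨-v, W.neg_mem hv, hmv⟩, 0) (by
    apply Subtype.ext
    simp [g, hRd])
  simp at this

end dich

section fin
open Classical

/-- Case B, exact counts. -/
lemma caseB {F : Type} [Field F] [Fintype F] (q : ℕ) (hq : 3 ≤ q) (hK : Fintype.card F = q ^ 2)
    (f : MvPolynomial (Fin 7) F) (hf : f.IsHomogeneous (q + 1))
    (W : Submodule F (Fin 7 → F)) (hW : finrank F W = 4)
    (h1 : (Finset.univ.filter (fun x : Fin 7 → F => eval x f = 0)).card + q ^ 7 = q ^ 13 + q ^ 6)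
    (h2 : (Finset.univ.filter (fun x : Fin 7 → F => x ∈ W ∧ eval x f = 0)).card = q ^ 6)
    (hns : ¬ ∃ W' : Submodule F (Fin 7 → F), finrank F W' = 4 ∧ ∀ x ∈ W', eval x f = 0)
    (b : Fin 3 → Fin 7 → F) (hinj : Function.Injective (Bm b))
    (hrange : ∀ x, (∃ y, Bm b y = x) ↔ x ∈ W ∧ eval x f = 0) :
    ∀ w, w ∉ W → (Gp f b w).totalDegree ≤ q ∧
      (Finset.univ.filter (fun y => eval y (Gp f b w) = 0)).card = q * (q ^ 2) ^ 2 := by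
  have hdeg : ∀ w, (Gp f b w).totalDegree ≤ q := by
    intro w
    have htd := Gp_totalDegree f (q + 1) hf.totalDegree_le b w
    refine totalDegree_drop _ q htd (by rw [hK]; nlinarith) fun P => ?_
    rw [← linePoly_coeff _ 0 P (q + 1) htd, Gp_line, linePoly_coeff _ _ _ _ hf.totalDegree_le,
      homogeneousComponent_eq_self hf]
    exact ((hrange _).mp ⟨P, rfl⟩).2
  have hne : ∀ w, w ∉ W → Gp f b w ≠ 0 := by
    intro w hw h0
    apply hns
    refine ⟨LinearMap.range (Bm b) ⊔ Submodule.span F {w}, ?_, ?_⟩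
    · have e1 := Submodule.finrank_sup_add_finrank_inf_eq (LinearMap.range (Bm b)) (Submodule.span F {w})
      have e2 : LinearMap.range (Bm b) ⊓ Submodule.span F {w} = ⊥ := by
        rw [eq_bot_iff]
        rintro x ⟨⟨y, hy⟩, hx⟩
        obtain ⟨c, hc⟩ := Submodule.mem_span_singleton.mp hx
        have hxW := ((hrange x).mp ⟨y, hy⟩).1
        by_cases hc0 : c = 0
        · rw [hc0, zero_smul] at hc
          rw [← hc]; exact Submodule.zero_mem _
        · exfalso
          apply hw
          rw [← hc] at hxW
          exact (Submodule.smul_mem_iff W hc0).mp hxW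
      have e3 : finrank F (LinearMap.range (Bm b)) = 3 := by
        rw [LinearMap.finrank_range_of_inj hinj]; simp
      have e4 : finrank F (Submodule.span F {w}) = 1 := by
        apply finrank_span_singleton
        rintro rfl
        exact hw W.zero_mem
      rw [e2, e3, e4, finrank_bot] at e1
      omega
    · intro x hx
      obtain ⟨p, ⟨y, hy⟩, z, hz, rfl⟩ := Submodule.mem_sup.mp hx
      obtain ⟨c, rfl⟩ := Submodule.mem_span_singleton.mp hz
      by_cases hc0 : c = 0
      · rw [hc0, zero_smul, add_zero]
        exact ((hrange p).mp ⟨y, hy⟩).2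
      · have : p + c • w = c • (w + Bm b (c⁻¹ • y)) := by
          rw [map_smul, hy, smul_add, smul_smul, mul_inv_cancel₀ hc0, one_smul, add_comm]
        rw [this, e_smul_iff f hf c hc0, ← Gp_eval, h0, map_zero]
  have hbd : ∀ w, w ∉ W → (Finset.univ.filter (fun y => eval y (Gp f b w) = 0)).card
      ≤ q * (q ^ 2) ^ 2 := by
    intro w hw
    have := sz_bound (Gp f b w) (hne w hw) q (hdeg w)
    rw [hK] at this
    convert this
  -- a vector outside
  obtain ⟨r, hrW, hr⟩ : ∃ r ∈ W, eval r f ≠ 0 := by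
    by_contra hcon
    push Not at hcon
    exact hns ⟨W, hW, hcon⟩
  have hU : ∀ w, Ucnt f W w = ∑ τ : F, (Finset.univ.filter
      (fun y => eval y (Gp f b (w + τ • r)) = 0)).card := by
    intro w
    let g : F × (Fin 3 → F) → W := fun x => ⟨x.1 • r + Bm b x.2,
      W.add_mem (W.smul_mem _ hrW) ((hrange _).mp ⟨_, rfl⟩).1⟩
    have ginj : Function.Injective g := by
      rintro ⟨τ, y⟩ ⟨τ', y'⟩ heq
      have h3 : τ • r + Bm b y = τ' • r + Bm b y' := congrArg Subtype.val heq
      have h4 : (τ - τ') • r = Bm b (y' - y) := by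
        rw [map_sub, sub_smul]
        rw [sub_eq_sub_iff_add_eq_add, h3, add_comm]
      have h5 : τ = τ' := by
        by_contra hne
        have := ((hrange _).mp ⟨_, h4.symm⟩).2
        rw [e_smul_iff f hf _ (sub_ne_zero.mpr hne)] at this
        exact hr this
      subst h5
      have := hinj (add_left_cancel h3)
      rw [this]
    have gbij : Function.Bijective g := by
      rw [Fintype.bijective_iff_injective_and_card]
      refine ⟨ginj, ?_⟩
      rw [Module.card_eq_pow_finrank (K := F) (V := W), hW]
      simp [hK]
      ring
    simp_rw [Gp_eval]
    have e1 : Ucnt f W w = (Finset.univ.filter (fun x : F × (Fin 3 → F) =>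
        eval (w + x.1 • r + Bm b x.2) f = 0)).card := by
      unfold Ucnt
      symm
      refine Finset.card_bij (fun x _ => (g x : Fin 7 → F)) ?_ ?_ ?_
      · intro x hx
        simp only [Finset.mem_filter, Finset.mem_univ, true_and] at hx ⊢
        refine ⟨(g x).2, ?_⟩
        simp only [g]
        rw [← add_assoc]; exact hx
      · intro x _ y _ h
        exact ginj (Subtype.ext h)
      · intro x hx
        simp only [Finset.mem_filter, Finset.mem_univ, true_and] at hx
        obtain ⟨z, hz⟩ := gbij.2 ⟨x, hx.1⟩
        have hz' : z.1 • r + Bm b z.2 = x := congrArg Subtype.val hz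
        refine ⟨z, ?_, hz'⟩
        simp only [Finset.mem_filter, Finset.mem_univ, true_and]
        rw [add_assoc, hz']; exact hx.2
    rw [e1]
    simp_rw [Finset.card_filter]
    rw [Fintype.sum_prod_type]
  have hout : ∀ (w : Fin 7 → F) (τ : F), w ∉ W → w + τ • r ∉ W := by
    intro w τ hw h
    exact hw ((Submodule.add_mem_iff_left W (W.smul_mem τ hrW)).mp h)
  have hsum : ∑ τ : F, q * (q ^ 2) ^ 2 = q ^ 7 := by
    rw [Finset.sum_const, Finset.card_univ, hK, smul_eq_mul]; ring
  have hav := avg q (by omega) hK f W hW h1 h2 (by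
    intro w hw
    rw [hU w, ← hsum]
    exact Finset.sum_le_sum fun τ _ => hbd _ (hout w τ hw))
  intro w hw
  refine ⟨hdeg w, ?_⟩
  have h3 := hav w hw
  rw [hU w, ← hsum] at h3
  have := (Finset.sum_eq_sum_iff_of_le (fun τ _ => hbd _ (hout w τ hw))).mp h3 0 (Finset.mem_univ _)
  rwa [zero_smul, add_zero] at this

/-- the transversal case -/
lemma transv {F : Type} [Field F] [Fintype F] (q : ℕ) (hq : 3 ≤ q) (hK : Fintype.card F = q ^ 2)
    (hq0 : (q : F) = 0)
    (f : MvPolynomial (Fin 7) F) (hf : f.IsHomogeneous (q + 1))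
    (W : Submodule F (Fin 7 → F))
    (b : Fin 3 → Fin 7 → F)
    (hrange : ∀ x, (∃ y, Bm b y = x) ↔ x ∈ W ∧ eval x f = 0)
    (hG : ∀ w, w ∉ W → (Gp f b w).totalDegree ≤ q ∧
      (Finset.univ.filter (fun y => eval y (Gp f b w) = 0)).card = q * (q ^ 2) ^ 2)
    (w v : Fin 7 → F) (hw : w ∉ W) (hv : v ∈ W) (hv0 : eval v f ≠ 0) :
    (Finset.univ.filter (fun l : F => eval (w + l • v) f = 0)).card = 1 ∨
    (Finset.univ.filter (fun l : F => eval (w + l • v) f = 0)).card = q + 1 := by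
  have hout : ∀ τ : F, w + τ • v ∉ W := by
    intro τ h
    exact hw ((Submodule.add_mem_iff_left W (W.smul_mem τ hv)).mp h)
  obtain ⟨P, hP⟩ : ∃ P : Fin 3 → F, ∀ τ : F,
      eval P (homogeneousComponent q (Gp f b (w + τ • v))) ≠ 0 := by
    by_contra hcon
    push Not at hcon
    let bad : F → Finset (Fin 3 → F) := fun τ => (Finset.univ.filter
      (fun y => eval y (homogeneousComponent q (Gp f b (w + τ • v))) = 0)).erase 0
    have hbad : ∀ τ, (bad τ).card ≤ (q ^ 2) ^ 2 - 1 := by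
      intro τ
      have := T_card q (by omega) hK (Gp f b (w + τ • v)) (hG _ (hout τ)).1 (hG _ (hout τ)).2
      simp only [bad]
      rw [Finset.card_erase_of_mem]
      · exact Nat.sub_le_sub_right this 1
      · simp only [Finset.mem_filter, Finset.mem_univ, true_and]
        have hhom := homogeneousComponent_isHomogeneous q (Gp f b (w + τ • v))
        have := e_smul _ hhom 0 0
        rw [zero_smul, zero_pow (by omega), zero_mul] at this
        exact this
    have hsub : (Finset.univ : Finset (Fin 3 → F)).erase 0 ⊆ Finset.univ.biUnion bad := by
      intro y hy
      obtain ⟨τ, hτ⟩ := hcon y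
      rw [Finset.mem_biUnion]
      refine ⟨τ, Finset.mem_univ _, ?_⟩
      simp only [bad, Finset.mem_erase, Finset.mem_filter, Finset.mem_univ, true_and]
      exact ⟨Finset.ne_of_mem_erase hy, hτ⟩
    have h3 := le_trans (Finset.card_le_card hsub)
      (Finset.card_biUnion_le_card_mul _ bad _ (fun τ _ => hbad τ))
    rw [Finset.card_erase_of_mem (Finset.mem_univ _), Finset.card_univ, Finset.card_univ, hK] at h3
    simp only [Fintype.card_pi, Finset.prod_const, Finset.card_univ, Fintype.card_fin, hK] at h3
    have hq4 : 2 ≤ q ^ 2 := by nlinarith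
    generalize q ^ 2 = Q at *
    have h5 : 1 ≤ Q ^ 2 := Nat.one_le_pow _ _ (by omega)
    rw [Nat.mul_sub, mul_one] at h3
    have h6 : Q * Q ^ 2 = Q ^ 3 := by ring
    have h7 : Q ≤ Q ^ 3 := by nlinarith
    omega
  set p := Bm b P with hp
  have hpW : p ∈ W := ((hrange p).mp ⟨P, rfl⟩).1
  have hvm : ∀ m : F, eval (v + m • p) f ≠ 0 := by
    intro m h
    obtain ⟨y, hy⟩ := (hrange _).mpr ⟨W.add_mem hv (W.smul_mem m hpW), h⟩
    apply hv0
    refine ((hrange v).mp ⟨y - m • P, ?_⟩).2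
    rw [map_sub, hy, map_smul, ← hp]; simp
  have hcol : ∀ s : F, (Finset.univ.filter (fun t : F => eval (w + s • v + t • p) f = 0)).card = q := by
    intro s
    have := T_exact q (by omega) hK (Gp f b (w + s • v)) (hG _ (hout s)).1 (hG _ (hout s)).2 P (hP s) 0
    simp_rw [Gp_eval, zero_add, map_smul] at this
    exact this
  have hform : ∀ m c s : F, w + s • v + (m * s + c) • p = (w + c • p) + s • (v + m • p) := by
    intro m c s
    ext i; simp; ring
  have := comb_plane q (by omega) hK (fun s t => eval (w + s • v + t • p) f = 0) hcol (by
    intro m c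
    simp_rw [hform]
    have hne : linePoly f (w + c • p) (v + m • p) ≠ 0 := by
      intro h
      have h2 := linePoly_coeff f (w + c • p) (v + m • p) (q + 1) hf.totalDegree_le
      rw [h, homogeneousComponent_eq_self hf] at h2
      exact hvm m (by simpa using h2.symm)
    have := poly_count _ (q + 1) (linePoly_natDegree f _ _ _ hf.totalDegree_le) hne
    simpa only [linePoly_eval] using this) (by
    intro m c
    by_contra hcon
    have h0 : (Finset.univ.filter (fun s : F => eval (w + s • v + (m * s + c) • p) f = 0)).card = 0 := by
      omega
    rw [Finset.card_eq_zero, Finset.filter_eq_empty_iff] at h0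
    simp_rw [hform] at h0
    have hpl := plane_lemma' q hq hK hq0 f hf (w + c • p) (v + m • p) p (by
      intro s t hst
      by_cases hs : s = 0
      · have ht : t ≠ 0 := fun h => hst ⟨hs, h⟩
        rw [hs, zero_smul, zero_add, Ne, e_smul_iff f hf t ht]
        exact hvm m
      · have : s • (w + c • p) + t • (v + m • p) = s • ((w + c • p) + (s⁻¹ * t) • (v + m • p)) := by
          rw [smul_add s (w + c • p), smul_smul, mul_inv_cancel_left₀ hs]
        rw [this, Ne, e_smul_iff f hf s hs]
        exact h0 (Finset.mem_univ _))
    have hcount : (Finset.univ.filter (fun x : F × F => eval (w + x.1 • v + x.2 • p) f = 0)).card = q ^ 3 := by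
      have e1 : (Finset.univ.filter (fun x : F × F => eval (w + x.1 • v + x.2 • p) f = 0)).card
          = ∑ s : F, (Finset.univ.filter (fun t : F => eval (w + s • v + t • p) f = 0)).card := by
        simp_rw [Finset.card_filter]
        rw [Fintype.sum_prod_type]
      rw [e1, Finset.sum_congr rfl (fun s _ => hcol s), Finset.sum_const, Finset.card_univ, hK, smul_eq_mul]
      ring
    rw [← hcount] at hpl
    refine absurd hpl (not_lt.mpr ?_)
    have hk0 : ∀ x : F × F, eval (w + x.1 • v + x.2 • p) f = 0 → x.2 - c - m * x.1 ≠ 0 := by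
      intro x hx hk
      have e1 : x.2 = m * x.1 + c := by linear_combination hk
      rw [e1, hform] at hx
      exact h0 (Finset.mem_univ _) hx
    refine Finset.card_le_card_of_injOn
      (fun x : F × F => ((x.2 - c - m * x.1)⁻¹, (x.2 - c - m * x.1)⁻¹ * x.1)) ?_ ?_
    · intro x hx
      simp only [Finset.coe_filter, Finset.mem_univ, true_and, Set.mem_ofPred_eq] at hx ⊢
      have hk := hk0 x hx
      rw [← e_smul_iff f hf _ hk]
      have hvec : (x.2-c-m*x.1) • (p + (x.2-c-m*x.1)⁻¹ • (w+c•p) + ((x.2-c-m*x.1)⁻¹*x.1) • (v+m•p)) = w + x.1•v + x.2•p := by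
        generalize hk' : x.2-c-m*x.1 = k at hk ⊢
        have e2 : x.2 = k + c + m * x.1 := by rw [← hk']; ring
        rw [e2]
        funext i
        simp only [Pi.smul_apply, Pi.add_apply, smul_eq_mul]
        field_simp
        ring
      rw [hvec]; exact hx
    · intro x hx y hy heq
      simp only [Finset.coe_filter, Finset.mem_univ, true_and, Set.mem_ofPred_eq] at hx hy
      have hkx := hk0 x hx
      simp only [Prod.mk.injEq] at heq
      have e1 := inv_injective heq.1
      have e2 := heq.2
      rw [← e1] at e2
      have e3 := mul_left_cancel₀ (inv_ne_zero hkx) e2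
      refine Prod.ext e3 ?_
      rw [e3] at e1
      linear_combination e1)
  have h00 := this 0 0
  simpa only [zero_mul, add_zero, zero_smul] using h00

end fin

section final
open Classical

lemma solid_plane {F : Type} [Field F] [Fintype F] (q : ℕ) (hq : 3 ≤ q)
    (hK : Fintype.card F = q ^ 2)
    (f : MvPolynomial (Fin 7) F) (hf : f.IsHomogeneous (q + 1))
    (W : Submodule F (Fin 7 → F)) (hW : finrank F W = 4)
    (h2 : (Finset.univ.filter (fun x : Fin 7 → F => x ∈ W ∧ eval x f = 0)).card = q ^ 6)
    (hB : ∀ u v, u ∈ W → v ∈ W → ∃ s t : F, ¬ (s = 0 ∧ t = 0) ∧ eval (s • u + t • v) f = 0) :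
    ∃ π : Submodule F (Fin 7 → F), finrank F π = 3 ∧ ∀ x, x ∈ π ↔ x ∈ W ∧ eval x f = 0 := by
  let π : Submodule F (Fin 7 → F) :=
    { carrier := {x | x ∈ W ∧ eval x f = 0}
      add_mem' := fun {u v} hu hv =>
        ⟨W.add_mem hu.1 hv.1, caseB_add q hK f hf W hW h2 hB u v hu.1 hv.1 hu.2 hv.2⟩
      zero_mem' := ⟨W.zero_mem, by simpa using e_smul f hf 0 0⟩
      smul_mem' := fun c x hx => ⟨W.smul_mem c hx.1, by rw [e_smul f hf, hx.2, mul_zero]⟩ }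
  have hm : ∀ x, x ∈ π ↔ x ∈ W ∧ eval x f = 0 := fun x => Iff.rfl
  refine ⟨π, ?_, hm⟩
  have hc := sub_card π
  simp_rw [hm] at hc
  rw [h2, hK, ← pow_mul] at hc
  have := Nat.pow_right_injective (by omega : 2 ≤ q) hc
  omega

lemma plane_basis {F : Type} [Field F] (π : Submodule F (Fin 7 → F)) (h : finrank F π = 3) :
    ∃ b : Fin 3 → Fin 7 → F, Function.Injective (Bm b) ∧ ∀ x, (∃ y, Bm b y = x) ↔ x ∈ π := by
  let B := Module.finBasisOfFinrankEq F π h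
  have hB : ∀ y, Bm (fun j => (B j : Fin 7 → F)) y = (B.equivFun.symm y : Fin 7 → F) := by
    intro y
    rw [Basis.equivFun_symm_apply]
    simp [Bm, Fintype.linearCombination_apply]
  refine ⟨fun j => (B j : Fin 7 → F), ?_, ?_⟩
  · intro y z hyz
    rw [hB, hB] at hyz
    exact B.equivFun.symm.injective (Subtype.ext hyz)
  · intro x
    constructor
    · rintro ⟨y, rfl⟩
      rw [hB]; exact Subtype.prop _
    · intro hx
      refine ⟨B.equivFun ⟨x, hx⟩, ?_⟩
      rw [hB, LinearEquiv.symm_apply_apply]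

lemma line_in {F : Type} [Field F] [Fintype F] (q : ℕ) (hq : 3 ≤ q)
    (hK : Fintype.card F = q ^ 2)
    (f : MvPolynomial (Fin 7) F) (hf : f.IsHomogeneous (q + 1))
    (W π L : Submodule F (Fin 7 → F)) (hW : finrank F W = 4) (hπ : finrank F π = 3)
    (hm : ∀ x, x ∈ π ↔ x ∈ W ∧ eval x f = 0) (hL : finrank F L = 2) (hLW : L ≤ W) :
    (hypersurfacePts f ∩ projPts L).ncard = 1 ∨
      (hypersurfacePts f ∩ projPts L).ncard = q ^ 2 + 1 := by
  have h1 := vz_ncard f hf L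
  have h2 : (Finset.univ.filter (fun x : Fin 7 → F => x ∈ L ∧ eval x f = 0)).card
      = Fintype.card F ^ finrank F (L ⊓ π : Submodule F (Fin 7 → F)) := by
    rw [← sub_card]
    congr 1
    ext x
    simp only [Finset.mem_filter, Finset.mem_univ, true_and, Submodule.mem_inf, hm]
    constructor
    · rintro ⟨a, b⟩; exact ⟨a, hLW a, b⟩
    · rintro ⟨a, _, b⟩; exact ⟨a, b⟩
  have h3 := Submodule.finrank_sup_add_finrank_inf_eq L π
  have hsup : L ⊔ π ≤ W := sup_le hLW fun x hx => ((hm x).mp hx).1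
  have h4 := Submodule.finrank_mono hsup
  have h5 := Submodule.finrank_mono (inf_le_left : L ⊓ π ≤ L)
  rw [h2, hK] at h1
  generalize (hypersurfacePts f ∩ projPts L).ncard = N at *
  obtain ⟨r, hr⟩ : ∃ r, q ^ 2 = r + 2 := ⟨q ^ 2 - 2, by
    have : 2 ≤ q ^ 2 := by nlinarith
    omega⟩
  have hcase : finrank F (L ⊓ π : Submodule F (Fin 7 → F)) = 1 ∨
      finrank F (L ⊓ π : Submodule F (Fin 7 → F)) = 2 := by omega
  rw [hr, show r + 2 - 1 = r + 1 by omega] at h1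
  rw [hr]
  rcases hcase with h | h
  · left
    rw [h] at h1
    have : (r + 1) * N = (r + 1) * 1 := by linarith
    exact Nat.eq_of_mul_eq_mul_left (by omega) this
  · right
    rw [h] at h1
    have : (r + 1) * N = (r + 1) * (r + 2 + 1) := by nlinarith
    exact Nat.eq_of_mul_eq_mul_left (by omega) this

lemma line_out {F : Type} [Field F] [Fintype F] (q : ℕ) (hq : 3 ≤ q)
    (hK : Fintype.card F = q ^ 2) (hq0 : (q : F) = 0)
    (f : MvPolynomial (Fin 7) F) (hf : f.IsHomogeneous (q + 1))
    (W W4 L : Submodule F (Fin 7 → F)) (hW : finrank F W = 4) (hW4 : finrank F W4 = 5)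
    (hle : W ≤ W4)
    (b : Fin 3 → Fin 7 → F)
    (hrange : ∀ x, (∃ y, Bm b y = x) ↔ x ∈ W ∧ eval x f = 0)
    (hG : ∀ w, w ∉ W → (Gp f b w).totalDegree ≤ q ∧
      (Finset.univ.filter (fun y => eval y (Gp f b w) = 0)).card = q * (q ^ 2) ^ 2)
    (hL : finrank F L = 2) (hLW : L ≤ W4) (hn : ¬ L ≤ W) :
    (hypersurfacePts f ∩ projPts L).ncard = 1 ∨ (hypersurfacePts f ∩ projPts L).ncard = q + 1 ∨
      (hypersurfacePts f ∩ projPts L).ncard = q ^ 2 + 1 := by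
  obtain ⟨w, hwL, hw⟩ := Set.not_subset.mp hn
  have hw : w ∉ W := hw
  have hwL : w ∈ L := hwL
  have h3 := Submodule.finrank_sup_add_finrank_inf_eq L W
  have h4 := Submodule.finrank_mono (sup_le hLW hle)
  have h5 : (L ⊓ W : Submodule F (Fin 7 → F)) ≠ ⊥ := by
    intro h
    rw [h, finrank_bot] at h3
    omega
  obtain ⟨v, hv, hv0⟩ := Submodule.exists_mem_ne_zero_of_ne_bot h5
  have hvL : v ∈ L := hv.1
  have hvW : v ∈ W := hv.2
  have hind : ∀ a b : F, a • w + b • v = 0 → a = 0 ∧ b = 0 := by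
    intro a b h
    have ha : a = 0 := by
      by_contra ha
      apply hw
      have : a • w ∈ W := by
        rw [eq_neg_of_add_eq_zero_left h]
        exact W.neg_mem (W.smul_mem _ hvW)
      exact (W.smul_mem_iff ha).mp this
    refine ⟨ha, ?_⟩
    rw [ha, zero_smul, zero_add] at h
    exact (smul_eq_zero.mp h).resolve_right hv0
  have hspan : Submodule.span F {w, v} = L := by
    refine Submodule.eq_of_le_of_finrank_eq (Submodule.span_le.mpr ?_) ?_
    · intro x hx
      rcases hx with rfl | rfl
      · exact hwL
      · exact hvL
    · have hli : LinearIndependent F ![w, v] := LinearIndependent.pair_iff.mpr hind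
      have := finrank_span_eq_card hli
      have hr : Set.range ![w, v] = {w, v} := by
        ext x
        simp [eq_comm, or_comm]
      rw [hr, Fintype.card_fin] at this
      rw [this, hL]
  have hLm : ∀ x, x ∈ L ↔ ∃ a b : F, a • w + b • v = x := by
    intro x
    rw [← hspan, Submodule.mem_span_pair]
  rw [vz_line f hf L v w hind hLm]
  by_cases he : eval v f = 0
  · rw [if_pos he]
    obtain ⟨P, hP⟩ := (hrange v).mpr ⟨hvW, he⟩
    obtain ⟨hd, hN⟩ := hG w hw
    have hform : ∀ l : F, eval (w + l • v) f = eval (0 + l • P) (Gp f b w) := by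
      intro l
      rw [Gp_eval, zero_add, map_smul, hP]
    simp_rw [hform]
    by_cases hc : eval P (homogeneousComponent q (Gp f b w)) = 0
    · rcases T_bad q (by omega) hK _ hd hN P 0 hc with h | h
      · right; right
        rw [Finset.filter_true_of_mem (fun l _ => h l), Finset.card_univ, hK]
      · left
        rw [Finset.filter_false_of_mem (fun l _ => h l), Finset.card_empty]
    · right; left
      rw [T_exact q (by omega) hK _ hd hN P hc 0]
  · rw [if_neg he]
    rcases transv q hq hK hq0 f hf W b hrange hG w v hw hvW he with h | h
    · left; rw [h]
    · right; left; rw [h]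

end final

/-- Under the hypotheses of the main theorem, if `Σ₄` is a `4`-space through the special
solid `Σ₃` and `C := S ∩ Σ₄`, then every line of `Σ₄` meets `C` in exactly `1`, `q+1` or
`q²+1` rational points. -/
theorem stmt_11 (q : ℕ) (hq : ∃ p k : ℕ, p.Prime ∧ 0 < k ∧ q = p ^ k) (hq2 : 2 < q)
    (F : Type) [Field F] [Fintype F] (hcardF : Fintype.card F = q ^ 2)
    (f : MvPolynomial (Fin 7) F) (hf0 : f ≠ 0) (hfdeg : f.IsHomogeneous (q + 1))
    (S : Set (Projectivization F (Fin 7 → F))) (hS : S = hypersurfacePts f)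
    (hnosolid : ¬ ∃ W : Submodule F (Fin 7 → F), Module.finrank F W = 4 ∧ projPts W ⊆ S)
    (hcardS : S.ncard = q ^ 11 + q ^ 9 + q ^ 7 + q ^ 4 + q ^ 2 + 1)
    (W₃ : Submodule F (Fin 7 → F)) (hW₃ : Module.finrank F W₃ = 4)
    (hint : (S ∩ projPts W₃).ncard = q ^ 4 + q ^ 2 + 1)
    (W₄ : Submodule F (Fin 7 → F)) (hW₄ : Module.finrank F W₄ = 5) (hle : W₃ ≤ W₄)
    (C : Set (Projectivization F (Fin 7 → F))) (hC : C = S ∩ projPts W₄) :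
    ∀ L : Submodule F (Fin 7 → F), Module.finrank F L = 2 → L ≤ W₄ →
      (C ∩ projPts L).ncard = 1 ∨ (C ∩ projPts L).ncard = q + 1 ∨
        (C ∩ projPts L).ncard = q ^ 2 + 1 := by
  classical
  intro L hL hLW
  have hq3 : 3 ≤ q := hq2
  have hq0 : (q : F) = 0 := by
    have h := FiniteField.cast_card_eq_zero F
    rw [hcardF, Nat.cast_pow] at h
    exact pow_eq_zero_iff (two_ne_zero) |>.mp h
  subst hS
  have hCL : C ∩ projPts L = hypersurfacePts f ∩ projPts L := by
    rw [hC]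
    ext P
    constructor
    · rintro ⟨⟨a, _⟩, b⟩; exact ⟨a, b⟩
    · rintro ⟨a, b⟩
      exact ⟨⟨a, le_trans (show P.submodule ≤ L from b) hLW⟩, b⟩
  rw [hCL]
  have hsub : ∀ r : ℕ, q ^ 2 - 1 = r → q ^ 2 = r + 1 := by
    intro r hr
    have : 1 ≤ q ^ 2 := Nat.one_le_pow _ _ (by omega)
    omega
  have h2 : (Finset.univ.filter (fun x : Fin 7 → F => x ∈ W₃ ∧ eval x f = 0)).card = q ^ 6 := by
    rw [vz_ncard f hfdeg W₃, hint, hcardF]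
    generalize hr : q ^ 2 - 1 = r
    have e := hsub r hr
    rw [show q ^ 4 = (q ^ 2) ^ 2 by ring, show q ^ 6 = (q ^ 2) ^ 3 by ring, e]
    ring
  have h1 : (Finset.univ.filter (fun x : Fin 7 → F => eval x f = 0)).card + q ^ 7
      = q ^ 13 + q ^ 6 := by
    have h := vz_ncard f hfdeg (⊤ : Submodule F (Fin 7 → F))
    have ht : hypersurfacePts f ∩ projPts (⊤ : Submodule F (Fin 7 → F)) = hypersurfacePts f := by
      ext P
      exact ⟨fun h => h.1, fun h => ⟨h, show P.submodule ≤ ⊤ from le_top⟩⟩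
    rw [ht, hcardS, hcardF] at h
    simp only [Submodule.mem_top, true_and] at h
    rw [h]
    generalize hr : q ^ 2 - 1 = r
    have e := hsub r hr
    rw [show q ^ 11 = q * (q ^ 2) ^ 5 by ring, show q ^ 9 = q * (q ^ 2) ^ 4 by ring,
      show q ^ 7 = q * (q ^ 2) ^ 3 by ring, show q ^ 13 = q * (q ^ 2) ^ 6 by ring,
      show q ^ 4 = (q ^ 2) ^ 2 by ring, show q ^ 6 = (q ^ 2) ^ 3 by ring, e]
    ring
  have hns : ¬ ∃ W' : Submodule F (Fin 7 → F), finrank F W' = 4 ∧ ∀ x ∈ W', eval x f = 0 := by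
    rintro ⟨W', hW', hz⟩
    refine hnosolid ⟨W', hW', ?_⟩
    intro P hP
    have hP : P.submodule ≤ W' := hP
    refine hz _ (hP ?_)
    rw [Projectivization.submodule_eq]
    exact Submodule.mem_span_singleton_self _
  have hB : ∀ u v, u ∈ W₃ → v ∈ W₃ →
      ∃ s t : F, ¬ (s = 0 ∧ t = 0) ∧ eval (s • u + t • v) f = 0 := by
    intro u v hu hv
    by_contra hcon
    have hext : ∀ s t : F, ¬ (s = 0 ∧ t = 0) → eval (s • u + t • v) f ≠ 0 :=
      fun s t hst h => hcon ⟨s, t, hst, h⟩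
    have hlt := caseA q hq3 hcardF hq0 f hfdeg W₃ hW₃ u v hu hv hext
    have hav := avg q (by omega) hcardF f W₃ hW₃ h1 h2 (fun w _ => (hlt w).le)
    obtain ⟨w, hw⟩ : ∃ w, w ∉ W₃ := by
      by_contra hall
      have : W₃ = ⊤ := by
        ext x
        simp only [Submodule.mem_top, iff_true]
        by_contra hx
        exact hall ⟨x, hx⟩
      rw [this, finrank_top, Module.finrank_fin_fun] at hW₃
      omega
    have a1 := hlt w
    have a2 := hav w hw
    omega
  obtain ⟨π, hπ, hm⟩ := solid_plane q hq3 hcardF f hfdeg W₃ hW₃ h2 hB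
  obtain ⟨b, hinj, hr⟩ := plane_basis π hπ
  have hrange : ∀ x, (∃ y, Bm b y = x) ↔ x ∈ W₃ ∧ eval x f = 0 := fun x => (hr x).trans (hm x)
  have hG := caseB q hq3 hcardF f hfdeg W₃ hW₃ h1 h2 hns b hinj hrange
  by_cases hin : L ≤ W₃
  · rcases line_in q hq3 hcardF f hfdeg W₃ π L hW₃ hπ hm hL hin with h | h
    · exact Or.inl h
    · exact Or.inr (Or.inr h)
  · exact line_out q hq3 hcardF hq0 f hfdeg W₃ W₄ L hW₃ hW₄ hle b hrange hG hL hLW hin
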